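/- arXiv:gr-qc/0502116 — 2 statements merged into one kernel-verified Lean document; each statement's English description precedes it below -/
import Mathlib

section
/- Let η, α, U, A, φ, σ be smooth functions of (t,θ) ∈ (T₋,T₊) × S¹ with α > 0 satisfying the first energy constraint η̇/t = U̇² + αU'² + (e^{4U}/(4t²))(Ȧ² + αA'²) + (1/4)[φ̇² + αφ'² + e^{2λφ}(σ̇² + ασ'²) + αQ²e^{2λφ+2(η−U)}], the equation α̇ = −tα²Q²e^{2λφ+2(η−U)}, and the four evolution equations of the Gowdy symmetric IIA system (i.e. all equations of the system except the momentum constraint). Define N := η' − 2tU̇U' − (e^{4U}/(2t))ȦA' − (t/2)φ̇φ' − (t e^{2λφ}/2)σ̇σ' + α'/(2α). Then N satisfies, for each fixed θ, the linear homogeneous ODE t∂ₜN − (t α̇/(2α))N = 0; consequently, if N(t₀,·) ≡ 0 for some t₀ ∈ (T₋,T₊), then N ≡ 0 on (T₋,T₊) × S¹, i.e. the momentum constraint η'/t = 2U̇U' + (e^{4U}/(2t²))ȦA' − α'/(2tα) + (1/2)(φ̇φ' + e^{2λφ}σ̇σ') holds everywhere. -/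
/-!
Write `V = α Q² e^{2λφ + 2(η - U)}`.  The equation for `α` says `α̇ / α = -t V`, so
`∂ₜ (α' / (2α)) = -(t V)' / 2`, while the `θ`-derivative of the energy constraint expresses `∂ₜ η'`
through the first and second derivatives of `U, A, φ, σ` and `t V' / 4`.  Inserting the four wave
equations for `Ü, Ä, φ̈, σ̈` into `∂ₜ N`, all second derivatives cancel, and since
`V' = V (2 λ φ' + 2 η' - 2 U' + α' / α)` what is left is exactly `-(t V / 2) N = (α̇ / (2α)) N`
(`momN_algebra`, `momN_hasDerivAt`).  Smoothness is only used to differentiate and to exchange the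
two partial derivatives (`SmoothSlab.pt_pth_comm`).

The ODE makes `N² / α` constant in time for each `θ`; as `α > 0`, `N` vanishes for all
times once it vanishes at `t₀`.  The momentum constraint is `N = 0` divided by `t`.
-/

noncomputable section

open Real Set MeasureTheory Filter

/-- Partial derivative in the first (time) variable. -/
def pt (f : ℝ → ℝ → ℝ) : ℝ → ℝ → ℝ := fun t θ => deriv (fun s => f s θ) t

/-- Partial derivative in the second (angle) variable. -/
def pth (f : ℝ → ℝ → ℝ) : ℝ → ℝ → ℝ := fun t θ => deriv (fun x => f t x) θ

/-- The full Gowdy symmetric IIA system (both constraints, the equation for `α`,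
and the four evolution equations) holding at all times in `S` (dot = `pt`,
prime = `pth`). -/
structure IsGowdyIIA (Q lam : ℝ) (S : Set ℝ) (η α U A φ σ : ℝ → ℝ → ℝ) : Prop where
  alpha_pos : ∀ t ∈ S, ∀ θ : ℝ, 0 < α t θ
  constraint_t : ∀ t ∈ S, ∀ θ : ℝ,
    pt η t θ / t =
      (pt U t θ) ^ 2 + α t θ * (pth U t θ) ^ 2
      + exp (4 * U t θ) / (4 * t ^ 2) * ((pt A t θ) ^ 2 + α t θ * (pth A t θ) ^ 2)
      + (1 / 4) * ((pt φ t θ) ^ 2 + α t θ * (pth φ t θ) ^ 2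
          + exp (2 * lam * φ t θ) * ((pt σ t θ) ^ 2 + α t θ * (pth σ t θ) ^ 2)
          + α t θ * Q ^ 2 * exp (2 * lam * φ t θ + 2 * (η t θ - U t θ)))
  constraint_θ : ∀ t ∈ S, ∀ θ : ℝ,
    pth η t θ / t =
      2 * pt U t θ * pth U t θ
      + exp (4 * U t θ) / (2 * t ^ 2) * (pt A t θ * pth A t θ)
      - pth α t θ / (2 * t * α t θ)
      + (1 / 2) * (pt φ t θ * pth φ t θ
          + exp (2 * lam * φ t θ) * (pt σ t θ * pth σ t θ))
  constraint_α : ∀ t ∈ S, ∀ θ : ℝ,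
    pt α t θ = - t * (α t θ) ^ 2 * Q ^ 2 * exp (2 * lam * φ t θ + 2 * (η t θ - U t θ))
  evol_U : ∀ t ∈ S, ∀ θ : ℝ,
    pt (pt U) t θ - α t θ * pth (pth U) t θ =
      - pt U t θ / t + pt α t θ * pt U t θ / (2 * α t θ) + pth α t θ * pth U t θ / 2
      + exp (4 * U t θ) / (2 * t ^ 2) * ((pt A t θ) ^ 2 - α t θ * (pth A t θ) ^ 2)
      + (1 / 4) * α t θ * Q ^ 2 * exp (2 * lam * φ t θ + 2 * (η t θ - U t θ))
  evol_A : ∀ t ∈ S, ∀ θ : ℝ,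
    pt (pt A) t θ - α t θ * pth (pth A) t θ =
      pt A t θ / t + pt α t θ * pt A t θ / (2 * α t θ) + pth α t θ * pth A t θ / 2
      - 4 * (pt A t θ * pt U t θ - α t θ * pth A t θ * pth U t θ)
  evol_φ : ∀ t ∈ S, ∀ θ : ℝ,
    pt (pt φ) t θ - α t θ * pth (pth φ) t θ =
      - pt φ t θ / t + pt α t θ * pt φ t θ / (2 * α t θ) + pth α t θ * pth φ t θ / 2
      + lam * exp (2 * lam * φ t θ) * ((pt σ t θ) ^ 2 - α t θ * (pth σ t θ) ^ 2)
      - lam * α t θ * Q ^ 2 * exp (2 * lam * φ t θ + 2 * (η t θ - U t θ))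
  evol_σ : ∀ t ∈ S, ∀ θ : ℝ,
    pt (pt σ) t θ - α t θ * pth (pth σ) t θ =
      - pt σ t θ / t + pt α t θ * pt σ t θ / (2 * α t θ) + pth α t θ * pth σ t θ / 2
      - 2 * lam * (pt φ t θ * pt σ t θ - α t θ * pth φ t θ * pth σ t θ)

/-- A smooth, spatially `2π`-periodic solution of the Gowdy symmetric IIA system
on the areal time interval `(Tm, Tp)`. -/
structure GowdySolution (Q lam Tm Tp : ℝ) where
  η : ℝ → ℝ → ℝ
  α : ℝ → ℝ → ℝ
  U : ℝ → ℝ → ℝ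
  A : ℝ → ℝ → ℝ
  φ : ℝ → ℝ → ℝ
  σ : ℝ → ℝ → ℝ
  smooth : ∀ f ∈ ([η, α, U, A, φ, σ] : List (ℝ → ℝ → ℝ)),
    ContDiffOn ℝ (⊤ : ℕ∞) (fun p : ℝ × ℝ => f p.1 p.2) (Ioo Tm Tp ×ˢ (univ : Set ℝ))
  periodic : ∀ f ∈ ([η, α, U, A, φ, σ] : List (ℝ → ℝ → ℝ)), ∀ t θ : ℝ,
    f t (θ + 2 * π) = f t θ
  sys : IsGowdyIIA Q lam (Ioo Tm Tp) η α U A φ σ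

/-- The energy density `𝓔`. -/
def calE (lam : ℝ) (α U A φ σ : ℝ → ℝ → ℝ) (t θ : ℝ) : ℝ :=
  (pt U t θ) ^ 2 + α t θ * (pth U t θ) ^ 2
  + exp (4 * U t θ) / (4 * t ^ 2) * ((pt A t θ) ^ 2 + α t θ * (pth A t θ) ^ 2)
  + (1 / 4) * ((pt φ t θ) ^ 2 + α t θ * (pth φ t θ) ^ 2
      + exp (2 * lam * φ t θ) * ((pt σ t θ) ^ 2 + α t θ * (pth σ t θ) ^ 2))

/-- The energy `E(t)` (integral over the circle `S¹ = [0, 2π]`). -/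
def energyE (Q lam : ℝ) (η α U A φ σ : ℝ → ℝ → ℝ) (t : ℝ) : ℝ :=
  ∫ θ in Ioc (0 : ℝ) (2 * π),
    (1 / Real.sqrt (α t θ)) *
      (calE lam α U A φ σ t θ
        + (1 / 4) * α t θ * Q ^ 2 * exp (2 * (η t θ + lam * φ t θ - U t θ)))

/-- The energy `Ẽ(t)`. -/
def energyEt (lam : ℝ) (α U A φ σ : ℝ → ℝ → ℝ) (t : ℝ) : ℝ :=
  ∫ θ in Ioc (0 : ℝ) (2 * π), calE lam α U A φ σ t θ / Real.sqrt (α t θ)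

/-- The timelike convergence condition (TCC) for the Gowdy symmetric IIA system. -/
def TCC (Q lam Tm Tp : ℝ) (η α U φ σ : ℝ → ℝ → ℝ) : Prop :=
  ∀ t ∈ Ioo Tm Tp, ∀ θ : ℝ,
    (pt φ t θ) ^ 2 + exp (2 * lam * φ t θ) * (pt σ t θ) ^ 2
      ≥ (1 / 2) * α t θ * Q ^ 2 * exp (2 * (η t θ + lam * φ t θ - U t θ))

/-- The Gowdy symmetric IIA system *without* the momentum constraint. -/
structure IsGowdyIIANoMom (Q lam : ℝ) (S : Set ℝ) (η α U A φ σ : ℝ → ℝ → ℝ) : Prop where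
  alpha_pos : ∀ t ∈ S, ∀ θ : ℝ, 0 < α t θ
  constraint_t : ∀ t ∈ S, ∀ θ : ℝ,
    pt η t θ / t =
      (pt U t θ) ^ 2 + α t θ * (pth U t θ) ^ 2
      + exp (4 * U t θ) / (4 * t ^ 2) * ((pt A t θ) ^ 2 + α t θ * (pth A t θ) ^ 2)
      + (1 / 4) * ((pt φ t θ) ^ 2 + α t θ * (pth φ t θ) ^ 2
          + exp (2 * lam * φ t θ) * ((pt σ t θ) ^ 2 + α t θ * (pth σ t θ) ^ 2)
          + α t θ * Q ^ 2 * exp (2 * lam * φ t θ + 2 * (η t θ - U t θ)))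
  constraint_α : ∀ t ∈ S, ∀ θ : ℝ,
    pt α t θ = - t * (α t θ) ^ 2 * Q ^ 2 * exp (2 * lam * φ t θ + 2 * (η t θ - U t θ))
  evol_U : ∀ t ∈ S, ∀ θ : ℝ,
    pt (pt U) t θ - α t θ * pth (pth U) t θ =
      - pt U t θ / t + pt α t θ * pt U t θ / (2 * α t θ) + pth α t θ * pth U t θ / 2
      + exp (4 * U t θ) / (2 * t ^ 2) * ((pt A t θ) ^ 2 - α t θ * (pth A t θ) ^ 2)
      + (1 / 4) * α t θ * Q ^ 2 * exp (2 * lam * φ t θ + 2 * (η t θ - U t θ))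
  evol_A : ∀ t ∈ S, ∀ θ : ℝ,
    pt (pt A) t θ - α t θ * pth (pth A) t θ =
      pt A t θ / t + pt α t θ * pt A t θ / (2 * α t θ) + pth α t θ * pth A t θ / 2
      - 4 * (pt A t θ * pt U t θ - α t θ * pth A t θ * pth U t θ)
  evol_φ : ∀ t ∈ S, ∀ θ : ℝ,
    pt (pt φ) t θ - α t θ * pth (pth φ) t θ =
      - pt φ t θ / t + pt α t θ * pt φ t θ / (2 * α t θ) + pth α t θ * pth φ t θ / 2
      + lam * exp (2 * lam * φ t θ) * ((pt σ t θ) ^ 2 - α t θ * (pth σ t θ) ^ 2)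
      - lam * α t θ * Q ^ 2 * exp (2 * lam * φ t θ + 2 * (η t θ - U t θ))
  evol_σ : ∀ t ∈ S, ∀ θ : ℝ,
    pt (pt σ) t θ - α t θ * pth (pth σ) t θ =
      - pt σ t θ / t + pt α t θ * pt σ t θ / (2 * α t θ) + pth α t θ * pth σ t θ / 2
      - 2 * lam * (pt φ t θ * pt σ t θ - α t θ * pth φ t θ * pth σ t θ)

/-- A smooth, spatially `2π`-periodic solution of the Gowdy symmetric IIA system
minus the momentum constraint. -/
structure GowdySolutionNoMom (Q lam Tm Tp : ℝ) where
  η : ℝ → ℝ → ℝ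
  α : ℝ → ℝ → ℝ
  U : ℝ → ℝ → ℝ
  A : ℝ → ℝ → ℝ
  φ : ℝ → ℝ → ℝ
  σ : ℝ → ℝ → ℝ
  smooth : ∀ f ∈ ([η, α, U, A, φ, σ] : List (ℝ → ℝ → ℝ)),
    ContDiffOn ℝ (⊤ : ℕ∞) (fun p : ℝ × ℝ => f p.1 p.2) (Ioo Tm Tp ×ˢ (univ : Set ℝ))
  periodic : ∀ f ∈ ([η, α, U, A, φ, σ] : List (ℝ → ℝ → ℝ)), ∀ t θ : ℝ,
    f t (θ + 2 * π) = f t θ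
  sys : IsGowdyIIANoMom Q lam (Ioo Tm Tp) η α U A φ σ

/-- The constraint quantity `N`. -/
def momN (lam : ℝ) (η α U A φ σ : ℝ → ℝ → ℝ) : ℝ → ℝ → ℝ := fun t θ =>
  pth η t θ - 2 * t * pt U t θ * pth U t θ
  - exp (4 * U t θ) / (2 * t) * pt A t θ * pth A t θ
  - (t / 2) * pt φ t θ * pth φ t θ
  - t * exp (2 * lam * φ t θ) / 2 * pt σ t θ * pth σ t θ
  + pth α t θ / (2 * α t θ)

/-! ### Partial derivatives of smooth functions on the slab -/

/-- Joint smoothness of a function of `(t, θ)` on the slab `(Tm, Tp) × ℝ`. -/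
def SmoothSlab (Tm Tp : ℝ) (f : ℝ → ℝ → ℝ) : Prop :=
  ContDiffOn ℝ (⊤ : ℕ∞) (fun p : ℝ × ℝ => f p.1 p.2) (Ioo Tm Tp ×ˢ (univ : Set ℝ))

lemma isOpen_slab (Tm Tp : ℝ) : IsOpen (Ioo Tm Tp ×ˢ (univ : Set ℝ)) :=
  isOpen_Ioo.prod isOpen_univ

section Slab

variable {Tm Tp : ℝ} {f : ℝ → ℝ → ℝ}

lemma SmoothSlab.contDiffAt (hf : SmoothSlab Tm Tp f) {t : ℝ} (ht : t ∈ Ioo Tm Tp) (θ : ℝ) :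
    ContDiffAt ℝ (⊤ : ℕ∞) (fun p : ℝ × ℝ => f p.1 p.2) (t, θ) :=
  ContDiffOn.contDiffAt hf ((isOpen_slab Tm Tp).mem_nhds ⟨ht, mem_univ _⟩)

lemma SmoothSlab.hasFDerivAt (hf : SmoothSlab Tm Tp f) {t : ℝ} (ht : t ∈ Ioo Tm Tp) (θ : ℝ) :
    HasFDerivAt (fun p : ℝ × ℝ => f p.1 p.2)
      (fderiv ℝ (fun p : ℝ × ℝ => f p.1 p.2) (t, θ)) (t, θ) :=
  ((hf.contDiffAt ht θ).differentiableAt (by simp)).hasFDerivAt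

lemma SmoothSlab.hasDerivAt_fst_aux (hf : SmoothSlab Tm Tp f) {t : ℝ} (ht : t ∈ Ioo Tm Tp)
    (θ : ℝ) : HasDerivAt (fun s => f s θ)
      (fderiv ℝ (fun p : ℝ × ℝ => f p.1 p.2) (t, θ) (1, 0)) t :=
  (hf.hasFDerivAt ht θ).comp_hasDerivAt (f := fun s : ℝ => (s, θ)) t
    ((hasDerivAt_id t).prodMk (hasDerivAt_const t θ))

lemma SmoothSlab.hasDerivAt_snd_aux (hf : SmoothSlab Tm Tp f) {t : ℝ} (ht : t ∈ Ioo Tm Tp)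
    (θ : ℝ) : HasDerivAt (fun x => f t x)
      (fderiv ℝ (fun p : ℝ × ℝ => f p.1 p.2) (t, θ) (0, 1)) θ :=
  (hf.hasFDerivAt ht θ).comp_hasDerivAt (f := fun x : ℝ => (t, x)) θ
    ((hasDerivAt_const θ t).prodMk (hasDerivAt_id θ))

lemma SmoothSlab.pt_eq (hf : SmoothSlab Tm Tp f) {t : ℝ} (ht : t ∈ Ioo Tm Tp) (θ : ℝ) :
    pt f t θ = fderiv ℝ (fun p : ℝ × ℝ => f p.1 p.2) (t, θ) (1, 0) :=
  (hf.hasDerivAt_fst_aux ht θ).deriv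

lemma SmoothSlab.pth_eq (hf : SmoothSlab Tm Tp f) {t : ℝ} (ht : t ∈ Ioo Tm Tp) (θ : ℝ) :
    pth f t θ = fderiv ℝ (fun p : ℝ × ℝ => f p.1 p.2) (t, θ) (0, 1) :=
  (hf.hasDerivAt_snd_aux ht θ).deriv

lemma SmoothSlab.hasDerivAt_pt (hf : SmoothSlab Tm Tp f) {t : ℝ} (ht : t ∈ Ioo Tm Tp) (θ : ℝ) :
    HasDerivAt (fun s => f s θ) (pt f t θ) t :=
  hf.pt_eq ht θ ▸ hf.hasDerivAt_fst_aux ht θ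

lemma SmoothSlab.hasDerivAt_pth (hf : SmoothSlab Tm Tp f) {t : ℝ} (ht : t ∈ Ioo Tm Tp) (θ : ℝ) :
    HasDerivAt (fun x => f t x) (pth f t θ) θ :=
  hf.pth_eq ht θ ▸ hf.hasDerivAt_snd_aux ht θ

lemma SmoothSlab.fderiv_apply (hf : SmoothSlab Tm Tp f) (v : ℝ × ℝ) :
    ContDiffOn ℝ (⊤ : ℕ∞) (fun p => fderiv ℝ (fun p : ℝ × ℝ => f p.1 p.2) p v)
      (Ioo Tm Tp ×ˢ (univ : Set ℝ)) :=
  (ContDiffOn.fderiv_of_isOpen hf (isOpen_slab Tm Tp) (by simp)).clm_apply contDiffOn_const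

lemma SmoothSlab.pt (hf : SmoothSlab Tm Tp f) : SmoothSlab Tm Tp (pt f) :=
  (hf.fderiv_apply (1, 0)).congr fun p hp => hf.pt_eq hp.1 p.2

lemma SmoothSlab.pth (hf : SmoothSlab Tm Tp f) : SmoothSlab Tm Tp (pth f) :=
  (hf.fderiv_apply (0, 1)).congr fun p hp => hf.pth_eq hp.1 p.2

/-- Equality of mixed partial derivatives on the slab. -/
lemma SmoothSlab.pt_pth_comm (hf : SmoothSlab Tm Tp f) {t : ℝ} (ht : t ∈ Ioo Tm Tp) (θ : ℝ) :
    _root_.pt (_root_.pth f) t θ = _root_.pth (_root_.pt f) t θ := by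
  have two_le : (2 : WithTop ℕ∞) ≤ ((⊤ : ℕ∞) : WithTop ℕ∞) := WithTop.coe_le_coe.2 le_top
  have hsymm : IsSymmSndFDerivAt ℝ (fun p : ℝ × ℝ => f p.1 p.2) (t, θ) :=
    (hf.contDiffAt ht θ).isSymmSndFDerivAt (by simpa using two_le)
  have hd : DifferentiableAt ℝ (fderiv ℝ (fun p : ℝ × ℝ => f p.1 p.2)) (t, θ) :=
    ((hf.contDiffAt ht θ).fderiv_right (m := 1) (by norm_num; exact two_le)).differentiableAt (by simp)
  have key : ∀ (g : ℝ → ℝ → ℝ) (v : ℝ × ℝ),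
      (∀ s ∈ Ioo Tm Tp, ∀ x, g s x = fderiv ℝ (fun p : ℝ × ℝ => f p.1 p.2) (s, x) v) →
      ∀ w, fderiv ℝ (fun p : ℝ × ℝ => g p.1 p.2) (t, θ) w
        = fderiv ℝ (fderiv ℝ (fun p : ℝ × ℝ => f p.1 p.2)) (t, θ) w v := by
    intro g v hg w
    have he : (fun p : ℝ × ℝ => g p.1 p.2) =ᶠ[nhds (t, θ)]
        fun p => fderiv ℝ (fun p : ℝ × ℝ => f p.1 p.2) p v := by
      filter_upwards [(isOpen_slab Tm Tp).mem_nhds ⟨ht, mem_univ θ⟩] with p hp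
      exact hg p.1 hp.1 p.2
    rw [he.fderiv_eq, fderiv_clm_apply hd (differentiableAt_const v)]
    simp
  rw [hf.pth.pt_eq ht θ, hf.pt.pth_eq ht θ, key _ _ (fun s hs x => hf.pth_eq hs x),
    key _ _ (fun s hs x => hf.pt_eq hs x)]
  exact hsymm _ _

end Slab

/-! ### The ODE for the constraint quantity -/

/-- The pointwise cancellation behind the ODE for `N`.  For each field, the suffixes `t`, `h`
denote derivatives in `t` and `θ`; `e4 = e^{4U}`, `e2 = e^{2λφ}`, `W = e^{2λφ + 2(η - U)}`.
`hηth` and `hath` are the `θ`-derivatives of the energy constraint and of the equation for `α`;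
`N` and `Nt` are the value and the time derivative of the constraint quantity. -/
lemma momN_algebra
    {Q lam t a at' ah ath ηh ηth Ut Uh Utt Uth Uhh At Ah Att Ath Ahh
      φt φh φtt φth φhh σt σh σtt σth σhh e4 e2 W N Nt : ℝ}
    (ht : t ≠ 0) (ha : a ≠ 0)
    (hat : at' = - t * a ^ 2 * Q ^ 2 * W)
    (hath : ath = - t * Q ^ 2 * (2 * a * ah * W
      + a ^ 2 * (W * (2 * lam * φh + 2 * (ηh - Uh)))))
    (hηth : ηth = t * (2 * Ut * Uth + (ah * Uh ^ 2 + a * (2 * Uh * Uhh))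
      + ((e4 * (4 * Uh)) / (4 * t ^ 2) * (At ^ 2 + a * Ah ^ 2)
        + e4 / (4 * t ^ 2) * (2 * At * Ath + (ah * Ah ^ 2 + a * (2 * Ah * Ahh))))
      + (1 / 4) * (2 * φt * φth + (ah * φh ^ 2 + a * (2 * φh * φhh))
        + (e2 * (2 * lam * φh) * (σt ^ 2 + a * σh ^ 2)
          + e2 * (2 * σt * σth + (ah * σh ^ 2 + a * (2 * σh * σhh))))
        + (ah * Q ^ 2 * W + a * Q ^ 2 * (W * (2 * lam * φh + 2 * (ηh - Uh)))))))
    (hU : Utt - a * Uhh = - Ut / t + at' * Ut / (2 * a) + ah * Uh / 2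
      + e4 / (2 * t ^ 2) * (At ^ 2 - a * Ah ^ 2) + (1 / 4) * a * Q ^ 2 * W)
    (hA : Att - a * Ahh = At / t + at' * At / (2 * a) + ah * Ah / 2
      - 4 * (At * Ut - a * Ah * Uh))
    (hφ : φtt - a * φhh = - φt / t + at' * φt / (2 * a) + ah * φh / 2
      + lam * e2 * (σt ^ 2 - a * σh ^ 2) - lam * a * Q ^ 2 * W)
    (hσ : σtt - a * σhh = - σt / t + at' * σt / (2 * a) + ah * σh / 2
      - 2 * lam * (φt * σt - a * φh * σh))
    (hN : N = ηh - 2 * t * Ut * Uh - e4 / (2 * t) * At * Ah - (t / 2) * φt * φh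
      - t * e2 / 2 * σt * σh + ah / (2 * a))
    (hNt : Nt = ηth - ((2 * Ut + 2 * t * Utt) * Uh + 2 * t * Ut * Uth)
      - (((e4 * (4 * Ut) * (2 * t) - e4 * 2) / (2 * t) ^ 2 * At + e4 / (2 * t) * Att) * Ah
        + e4 / (2 * t) * At * Ath)
      - ((1 / 2 * φt + t / 2 * φtt) * φh + t / 2 * φt * φth)
      - (((e2 + t * (e2 * (2 * lam * φt))) / 2 * σt + t * e2 / 2 * σtt) * σh
        + t * e2 / 2 * σt * σth)
      + (ath * (2 * a) - ah * (2 * at')) / (2 * a) ^ 2) :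
    t * Nt - (t * at' / (2 * a)) * N = 0 := by
  have hU' : Utt = a * Uhh + (- Ut / t + at' * Ut / (2 * a) + ah * Uh / 2
      + e4 / (2 * t ^ 2) * (At ^ 2 - a * Ah ^ 2) + (1 / 4) * a * Q ^ 2 * W) := by linarith
  have hA' : Att = a * Ahh + (At / t + at' * At / (2 * a) + ah * Ah / 2
      - 4 * (At * Ut - a * Ah * Uh)) := by linarith
  have hφ' : φtt = a * φhh + (- φt / t + at' * φt / (2 * a) + ah * φh / 2
      + lam * e2 * (σt ^ 2 - a * σh ^ 2) - lam * a * Q ^ 2 * W) := by linarith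
  have hσ' : σtt = a * σhh + (- σt / t + at' * σt / (2 * a) + ah * σh / 2
      - 2 * lam * (φt * σt - a * φh * σh)) := by linarith
  subst hNt hN hU' hA' hφ' hσ' hηth hath hat
  field_simp
  ring

/-- `N` is differentiable in `t`, and its derivative satisfies the linear ODE. -/
lemma momN_hasDerivAt {Q lam Tm Tp : ℝ} (hTm : 0 < Tm) (G : GowdySolutionNoMom Q lam Tm Tp)
    {t : ℝ} (ht : t ∈ Ioo Tm Tp) (θ : ℝ) :
    ∃ Nt, HasDerivAt (fun s => momN lam G.η G.α G.U G.A G.φ G.σ s θ) Nt t ∧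
      t * Nt - (t * pt G.α t θ / (2 * G.α t θ)) * momN lam G.η G.α G.U G.A G.φ G.σ t θ = 0 := by
  have sη : SmoothSlab Tm Tp G.η := G.smooth _ (by simp)
  have sα : SmoothSlab Tm Tp G.α := G.smooth _ (by simp)
  have sU : SmoothSlab Tm Tp G.U := G.smooth _ (by simp)
  have sA : SmoothSlab Tm Tp G.A := G.smooth _ (by simp)
  have sφ : SmoothSlab Tm Tp G.φ := G.smooth _ (by simp)
  have sσ : SmoothSlab Tm Tp G.σ := G.smooth _ (by simp)
  have t0 : t ≠ 0 := (hTm.trans ht.1).ne'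
  have a0 : G.α t θ ≠ 0 := (G.sys.alpha_pos t ht θ).ne'
  -- the exponentials and their derivatives
  have e4t : HasDerivAt (fun s => exp (4 * G.U s θ)) (exp (4 * G.U t θ) * (4 * pt G.U t θ)) t :=
    ((sU.hasDerivAt_pt ht θ).const_mul 4).exp
  have e4h : HasDerivAt (fun x => exp (4 * G.U t x)) (exp (4 * G.U t θ) * (4 * pth G.U t θ)) θ :=
    ((sU.hasDerivAt_pth ht θ).const_mul 4).exp
  have e2t : HasDerivAt (fun s => exp (2 * lam * G.φ s θ))
      (exp (2 * lam * G.φ t θ) * (2 * lam * pt G.φ t θ)) t :=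
    ((sφ.hasDerivAt_pt ht θ).const_mul (2 * lam)).exp
  have e2h : HasDerivAt (fun x => exp (2 * lam * G.φ t x))
      (exp (2 * lam * G.φ t θ) * (2 * lam * pth G.φ t θ)) θ :=
    ((sφ.hasDerivAt_pth ht θ).const_mul (2 * lam)).exp
  have Wh : HasDerivAt (fun x => exp (2 * lam * G.φ t x + 2 * (G.η t x - G.U t x)))
      (exp (2 * lam * G.φ t θ + 2 * (G.η t θ - G.U t θ))
        * (2 * lam * pth G.φ t θ + 2 * (pth G.η t θ - pth G.U t θ))) θ :=
    (((sφ.hasDerivAt_pth ht θ).const_mul (2 * lam)).add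
      (((sη.hasDerivAt_pth ht θ).sub (sU.hasDerivAt_pth ht θ)).const_mul 2)).exp
  have sq : ∀ {f : ℝ → ℝ} {f' x : ℝ}, HasDerivAt f f' x →
      HasDerivAt (fun y => f y ^ 2) (2 * f x * f') x := fun h => by
    simpa using h.fun_pow 2
  have ah := sα.hasDerivAt_pth ht θ
  -- the `θ`-derivatives of the equation for `α` and of the energy constraint
  have h1 := sα.pt.hasDerivAt_pth ht θ
  rw [show (fun x => pt G.α t x) = _ from funext (G.sys.constraint_α t ht)] at h1
  have hath := h1.unique ((((sq ah).const_mul (-t)).mul_const (Q ^ 2)).mul Wh)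
  have h2 := sη.pt.hasDerivAt_pth ht θ
  rw [show (fun x => pt G.η t x) = _ from
    funext fun x => (div_eq_iff t0).1 (G.sys.constraint_t t ht x)] at h2
  have hηth := h2.unique (((((sq (sU.pt.hasDerivAt_pth ht θ)).add
    (ah.mul (sq (sU.pth.hasDerivAt_pth ht θ)))).add
    ((e4h.div_const (4 * t ^ 2)).mul ((sq (sA.pt.hasDerivAt_pth ht θ)).add
      (ah.mul (sq (sA.pth.hasDerivAt_pth ht θ)))))).add
    (((((sq (sφ.pt.hasDerivAt_pth ht θ)).add (ah.mul (sq (sφ.pth.hasDerivAt_pth ht θ)))).add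
      (e2h.mul ((sq (sσ.pt.hasDerivAt_pth ht θ)).add
        (ah.mul (sq (sσ.pth.hasDerivAt_pth ht θ)))))).add
      ((ah.mul_const (Q ^ 2)).mul Wh)).const_mul (1 / 4))).mul_const t)
  rw [← sα.pt_pth_comm ht θ] at hath
  rw [← sη.pt_pth_comm ht θ, ← sU.pt_pth_comm ht θ, ← sA.pt_pth_comm ht θ,
    ← sφ.pt_pth_comm ht θ, ← sσ.pt_pth_comm ht θ] at hηth
  have hid := hasDerivAt_id' t
  have hN := (((((sη.pth.hasDerivAt_pt ht θ).sub
    (((hid.const_mul 2).mul (sU.pt.hasDerivAt_pt ht θ)).mul (sU.pth.hasDerivAt_pt ht θ))).sub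
    (((e4t.div (hid.const_mul 2) (by simpa using t0)).mul (sA.pt.hasDerivAt_pt ht θ)).mul
      (sA.pth.hasDerivAt_pt ht θ))).sub
    (((hid.div_const 2).mul (sφ.pt.hasDerivAt_pt ht θ)).mul (sφ.pth.hasDerivAt_pt ht θ))).sub
    ((((hid.mul e2t).div_const 2).mul (sσ.pt.hasDerivAt_pt ht θ)).mul
      (sσ.pth.hasDerivAt_pt ht θ))).add
    ((sα.pth.hasDerivAt_pt ht θ).div ((sα.hasDerivAt_pt ht θ).const_mul 2) (by simpa using a0))
  refine ⟨_, hN, ?_⟩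
  refine momN_algebra (Uth := pt (pth G.U) t θ) (Ath := pt (pth G.A) t θ)
    (φth := pt (pth G.φ) t θ) (σth := pt (pth G.σ) t θ) t0 a0
    (G.sys.constraint_α t ht θ) (hath.trans ?_) (hηth.trans ?_)
    (G.sys.evol_U t ht θ) (G.sys.evol_A t ht θ) (G.sys.evol_φ t ht θ) (G.sys.evol_σ t ht θ) rfl ?_
  · ring
  · simp only [Pi.add_apply, Pi.mul_apply]
    ring
  · simp only [Pi.mul_apply, Pi.div_apply]
    ring

/-! ### Propagation of the constraint -/

theorem constraint_propagation (Q lam Tm Tp : ℝ) (hQ : Q ≠ 0) (hTm : 0 < Tm)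
    (hTp : Tm < Tp) (G : GowdySolutionNoMom Q lam Tm Tp) :
    (∀ t ∈ Ioo Tm Tp, ∀ θ : ℝ,
      t * pt (momN lam G.η G.α G.U G.A G.φ G.σ) t θ
        - (t * pt G.α t θ / (2 * G.α t θ)) * momN lam G.η G.α G.U G.A G.φ G.σ t θ = 0)
    ∧ ∀ t₀ ∈ Ioo Tm Tp,
        (∀ θ : ℝ, momN lam G.η G.α G.U G.A G.φ G.σ t₀ θ = 0) →
        ∀ t ∈ Ioo Tm Tp, ∀ θ : ℝ,
          momN lam G.η G.α G.U G.A G.φ G.σ t θ = 0 ∧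
          pth G.η t θ / t =
            2 * pt G.U t θ * pth G.U t θ
            + exp (4 * G.U t θ) / (2 * t ^ 2) * (pt G.A t θ * pth G.A t θ)
            - pth G.α t θ / (2 * t * G.α t θ)
            + (1 / 2) * (pt G.φ t θ * pth G.φ t θ
                + exp (2 * lam * G.φ t θ) * (pt G.σ t θ * pth G.σ t θ)) := by
  refine ⟨fun t ht θ => ?_, fun t₀ ht₀ h0 t ht θ => ?_⟩
  · obtain ⟨Nt, hNt, h⟩ := momN_hasDerivAt hTm G ht θ
    rwa [show pt (momN lam G.η G.α G.U G.A G.φ G.σ) t θ = Nt from hNt.deriv]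
  · set N := momN lam G.η G.α G.U G.A G.φ G.σ with hNdef
    have sα : SmoothSlab Tm Tp G.α := G.smooth _ (by simp)
    have t0 : t ≠ 0 := (hTm.trans ht.1).ne'
    have a0 : G.α t θ ≠ 0 := (G.sys.alpha_pos t ht θ).ne'
    have hd : ∀ s ∈ Ioo Tm Tp, HasDerivAt (fun s => N s θ ^ 2 / G.α s θ) 0 s := by
      intro s hs
      obtain ⟨Nt, hNt, h⟩ := momN_hasDerivAt hTm G hs θ
      have s0 : s ≠ 0 := (hTm.trans hs.1).ne'
      have b0 : G.α s θ ≠ 0 := (G.sys.alpha_pos s hs θ).ne'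
      refine ((hNt.pow 2).div (sα.hasDerivAt_pt hs θ) b0).congr_deriv ?_
      have h' : Nt = pt G.α s θ / (2 * G.α s θ) * N s θ := by
        apply mul_left_cancel₀ s0
        linear_combination h
      rw [h']
      simp only [Pi.pow_apply, ← hNdef]
      field_simp
      simp
    have hc : N t θ ^ 2 / G.α t θ = N t₀ θ ^ 2 / G.α t₀ θ :=
      isOpen_Ioo.is_const_of_deriv_eq_zero isPreconnected_Ioo
        (fun s hs => (hd s hs).differentiableAt.differentiableWithinAt)
        (fun s hs => (hd s hs).deriv) ht ht₀
    have hN0 : N t θ = 0 := by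
      rw [h0 θ] at hc
      simpa [a0] using hc
    refine ⟨hN0, ?_⟩
    simp only [hNdef, momN] at hN0
    field_simp at hN0 ⊢
    linear_combination hN0

end
end

section
/- Let (η, α, U, A, φ, σ) be a solution of the Gowdy symmetric IIA system on (T₋,T₊) with 0 < T₋ < t_i < T₊ < ∞. Assume there is a constant λ̄ with |λ| ≤ λ̄ < 1/2 and that the timelike convergence condition φ̇² + e^{2λφ}σ̇² ≥ (1/2)αQ²e^{2(η+λφ−U)} holds at every point of (T₋,T₊) × S¹. Then the functions η, α, U, A, φ, σ together with all of their partial derivatives of first and second order in t and θ are uniformly bounded on (T₋,T₊) × S¹. -/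
/-!
The argument is a first-order reformulation followed by energy and maximum-principle estimates.

With `h = √α`, `V = α Q² e^{2λφ + 2(η - U)} / 4` and `D± = ∂ₜ ± h ∂_θ`, the frame components
`p`, `q` of `D₊` and `D₋` of `(U, A, φ, σ)` together with `h` and `V` satisfy a closed first-order
system (`NullSys`): `p` and `q` are transported along the opposite null directions, `V` satisfies
transport equations along both, and `∂ₜ log h = -2tV`. The interaction terms of the wave map cancel
in the transport equations of `nrm p = |p|²` and `nrm q = |q|²`.

* Towards the future the damping `-4tV nrm p` dominates the source, and an exponential barrier
  bounds `nrm p` and `nrm q` (`NullSys.nrm_bdd_future`).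
* Towards the past the energy `E = ∫ ((nrm p + nrm q) / 2 + V) / h` stays bounded, and
  `∂_θ log V` is controlled in `L¹` by `E` and the length `P = ∫ 1/h`, so `V` is comparable to its mean on each circle
  (`NullSys.V_ratio`). The timelike convergence condition gives `V ≤ nrm p + nrm q`, hence the
  kinetic part `Ẽ` of `E` is at least `E / 3`. With the length `P = ∫ 1/h`, which satisfies
  `Ṗ = 2t ∫ V/h`, the quantity `Ẽ + κ log P - P / a²` is nonincreasing, so `P` has a positive lower
  bound (`NullSys.len_lower`). Since `V` is bounded by a multiple of `Ṗ / P`, a barrier of the form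
  `exp (m - k log P - L t)` bounds `nrm p` and `nrm q` (`NullSys.nrm_bdd_past`).
* The condition `V ≤ nrm p + nrm q` then bounds `V`, and the equation for `log h` bounds `h`, `1/h`
  and `∂_θ h`. The differentiated transport equations are linear in `∂_θ p`, `∂_θ q` up to bounded
  coefficients, which gives `C¹` bounds on `p`, `q`, `V`, `log h` and `∂_θ log h`
  (`NullSys.bd1`). All first derivatives of the metric functions are smooth functions of these
  (`GowdySolution.deriv_bd1`), which yields the `C²` bounds.
-/

noncomputable section

open Real Set MeasureTheory Filter

/-! ### Calculus of smooth periodic functions on a strip -/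

/-- Functions that are smooth on the strip `(a, b) × ℝ` and `2π`-periodic in the second variable
there. Nothing is required outside the strip. -/
def Sm (a b : ℝ) (f : ℝ → ℝ → ℝ) : Prop :=
  ContDiffOn ℝ (⊤ : ℕ∞) (fun p : ℝ × ℝ => f p.1 p.2) (Ioo a b ×ˢ (univ : Set ℝ)) ∧
    ∀ t ∈ Ioo a b, ∀ θ : ℝ, f t (θ + 2 * π) = f t θ

lemma isOpen_strip (a b : ℝ) : IsOpen (Ioo a b ×ˢ (univ : Set ℝ)) := isOpen_Ioo.prod isOpen_univ

lemma strip_nhds {a b t : ℝ} (ht : t ∈ Ioo a b) (θ : ℝ) :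
    Ioo a b ×ˢ (univ : Set ℝ) ∈ nhds (t, θ) :=
  (isOpen_strip a b).mem_nhds ⟨ht, mem_univ _⟩

namespace Sm

variable {a b : ℝ} {f g : ℝ → ℝ → ℝ}

lemma congr (hf : Sm a b f) (h : ∀ t ∈ Ioo a b, ∀ θ, g t θ = f t θ) : Sm a b g :=
  ⟨hf.1.congr fun p hp => h p.1 hp.1 p.2, fun t ht θ => by rw [h t ht, h t ht, hf.2 t ht]⟩

lemma add (hf : Sm a b f) (hg : Sm a b g) : Sm a b (fun t θ => f t θ + g t θ) :=
  ⟨hf.1.add hg.1, fun t ht θ => by simp only [hf.2 t ht, hg.2 t ht]⟩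

lemma sub (hf : Sm a b f) (hg : Sm a b g) : Sm a b (fun t θ => f t θ - g t θ) :=
  ⟨hf.1.sub hg.1, fun t ht θ => by simp only [hf.2 t ht, hg.2 t ht]⟩

lemma mul (hf : Sm a b f) (hg : Sm a b g) : Sm a b (fun t θ => f t θ * g t θ) :=
  ⟨hf.1.mul hg.1, fun t ht θ => by simp only [hf.2 t ht, hg.2 t ht]⟩

lemma neg (hf : Sm a b f) : Sm a b (fun t θ => - f t θ) :=
  ⟨hf.1.neg, fun t ht θ => by simp only [hf.2 t ht]⟩

lemma pow (hf : Sm a b f) (n : ℕ) : Sm a b (fun t θ => f t θ ^ n) :=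
  ⟨hf.1.pow n, fun t ht θ => by simp only [hf.2 t ht]⟩

lemma exp (hf : Sm a b f) : Sm a b (fun t θ => Real.exp (f t θ)) :=
  ⟨hf.1.exp, fun t ht θ => by simp only [hf.2 t ht]⟩

lemma const (c : ℝ) : Sm a b (fun _ _ => c) := ⟨contDiffOn_const, fun _ _ _ => rfl⟩

lemma time : Sm a b (fun t _ => t) := ⟨contDiffOn_fst, fun _ _ _ => rfl⟩

lemma inv (hf : Sm a b f) (h : ∀ t ∈ Ioo a b, ∀ θ, f t θ ≠ 0) : Sm a b (fun t θ => (f t θ)⁻¹) :=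
  ⟨hf.1.inv fun p hp => h p.1 hp.1 p.2, fun t ht θ => by simp only [hf.2 t ht]⟩

lemma div (hf : Sm a b f) (hg : Sm a b g) (h : ∀ t ∈ Ioo a b, ∀ θ, g t θ ≠ 0) :
    Sm a b (fun t θ => f t θ / g t θ) :=
  ⟨hf.1.div hg.1 fun p hp => h p.1 hp.1 p.2, fun t ht θ => by simp only [hf.2 t ht, hg.2 t ht]⟩

lemma log (hf : Sm a b f) (h : ∀ t ∈ Ioo a b, ∀ θ, f t θ ≠ 0) :
    Sm a b (fun t θ => Real.log (f t θ)) :=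
  ⟨hf.1.log fun p hp => h p.1 hp.1 p.2, fun t ht θ => by simp only [hf.2 t ht]⟩

lemma sqrt (hf : Sm a b f) (h : ∀ t ∈ Ioo a b, ∀ θ, f t θ ≠ 0) :
    Sm a b (fun t θ => Real.sqrt (f t θ)) :=
  ⟨hf.1.sqrt fun p hp => h p.1 hp.1 p.2, fun t ht θ => by simp only [hf.2 t ht]⟩

lemma contDiffAt (hf : Sm a b f) {t : ℝ} (ht : t ∈ Ioo a b) (θ : ℝ) :
    ContDiffAt ℝ (⊤ : ℕ∞) (fun p : ℝ × ℝ => f p.1 p.2) (t, θ) :=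
  hf.1.contDiffAt (strip_nhds ht θ)

lemma hasFDerivAt (hf : Sm a b f) {t : ℝ} (ht : t ∈ Ioo a b) (θ : ℝ) :
    HasFDerivAt (fun p : ℝ × ℝ => f p.1 p.2) (fderiv ℝ (fun p : ℝ × ℝ => f p.1 p.2) (t, θ))
      (t, θ) :=
  ((hf.contDiffAt ht θ).differentiableAt (by simp)).hasFDerivAt

lemma hasDerivAt_t' (hf : Sm a b f) {t : ℝ} (ht : t ∈ Ioo a b) (θ : ℝ) :
    HasDerivAt (fun s => f s θ) (fderiv ℝ (fun p : ℝ × ℝ => f p.1 p.2) (t, θ) (1, 0)) t := by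
  have h1 : HasDerivAt (fun s : ℝ => (s, θ)) ((1 : ℝ), (0 : ℝ)) t :=
    (hasDerivAt_id t).prodMk (hasDerivAt_const t θ)
  exact (hf.hasFDerivAt ht θ).comp_hasDerivAt t h1

lemma hasDerivAt_θ' (hf : Sm a b f) {t : ℝ} (ht : t ∈ Ioo a b) (θ : ℝ) :
    HasDerivAt (fun x => f t x) (fderiv ℝ (fun p : ℝ × ℝ => f p.1 p.2) (t, θ) (0, 1)) θ := by
  have h1 : HasDerivAt (fun x : ℝ => (t, x)) ((0 : ℝ), (1 : ℝ)) θ :=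
    (hasDerivAt_const θ t).prodMk (hasDerivAt_id θ)
  exact (hf.hasFDerivAt ht θ).comp_hasDerivAt θ h1

lemma pt_eq (hf : Sm a b f) {t : ℝ} (ht : t ∈ Ioo a b) (θ : ℝ) :
    pt f t θ = fderiv ℝ (fun p : ℝ × ℝ => f p.1 p.2) (t, θ) (1, 0) := (hf.hasDerivAt_t' ht θ).deriv

lemma pth_eq (hf : Sm a b f) {t : ℝ} (ht : t ∈ Ioo a b) (θ : ℝ) :
    pth f t θ = fderiv ℝ (fun p : ℝ × ℝ => f p.1 p.2) (t, θ) (0, 1) := (hf.hasDerivAt_θ' ht θ).deriv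

lemma dt (hf : Sm a b f) {t : ℝ} (ht : t ∈ Ioo a b) (θ : ℝ) :
    HasDerivAt (fun s => f s θ) (_root_.pt f t θ) t := by
  rw [hf.pt_eq ht]; exact hf.hasDerivAt_t' ht θ

lemma dth (hf : Sm a b f) {t : ℝ} (ht : t ∈ Ioo a b) (θ : ℝ) :
    HasDerivAt (fun x => f t x) (_root_.pth f t θ) θ := by
  rw [hf.pth_eq ht]; exact hf.hasDerivAt_θ' ht θ

lemma pt (hf : Sm a b f) : Sm a b (_root_.pt f) := by
  constructor
  · have h1 : ContDiffOn ℝ (⊤ : ℕ∞) (fun p : ℝ × ℝ =>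
        fderiv ℝ (fun p : ℝ × ℝ => f p.1 p.2) p ((1 : ℝ), (0 : ℝ))) (Ioo a b ×ˢ (univ : Set ℝ)) :=
      (hf.1.fderiv_of_isOpen (isOpen_strip a b) (by simp)).clm_apply contDiffOn_const
    exact h1.congr fun p hp => hf.pt_eq hp.1 p.2
  · intro t ht θ
    apply Filter.EventuallyEq.deriv_eq
    filter_upwards [isOpen_Ioo.mem_nhds ht] with s hs using hf.2 s hs θ

lemma pth (hf : Sm a b f) : Sm a b (_root_.pth f) := by
  constructor
  · have h1 : ContDiffOn ℝ (⊤ : ℕ∞) (fun p : ℝ × ℝ =>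
        fderiv ℝ (fun p : ℝ × ℝ => f p.1 p.2) p ((0 : ℝ), (1 : ℝ))) (Ioo a b ×ˢ (univ : Set ℝ)) :=
      (hf.1.fderiv_of_isOpen (isOpen_strip a b) (by simp)).clm_apply contDiffOn_const
    exact h1.congr fun p hp => hf.pth_eq hp.1 p.2
  · intro t ht θ
    have h1 := (hf.dth ht (θ + 2 * π)).comp_add_const θ (2 * π)
    have h2 : (fun x => f t (x + 2 * π)) = fun x => f t x := funext fun x => hf.2 t ht x
    rw [h2] at h1
    exact h1.unique (hf.dth ht θ)

lemma comm (hf : Sm a b f) {t : ℝ} (ht : t ∈ Ioo a b) (θ : ℝ) :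
    _root_.pt (_root_.pth f) t θ = _root_.pth (_root_.pt f) t θ := by
  set F : ℝ × ℝ → ℝ := fun p => f p.1 p.2 with hF
  have hd : DifferentiableAt ℝ (fderiv ℝ F) (t, θ) := by
    have h1 : ContDiffOn ℝ (⊤ : ℕ∞) (fderiv ℝ F) (Ioo a b ×ˢ (univ : Set ℝ)) :=
      hf.1.fderiv_of_isOpen (isOpen_strip a b) (by simp)
    exact (h1.contDiffAt (strip_nhds ht θ)).differentiableAt (by simp)
  have key : ∀ v : ℝ × ℝ, fderiv ℝ (fun p => fderiv ℝ F p v) (t, θ)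
      = (fderiv ℝ (fderiv ℝ F) (t, θ)).flip v := by
    intro v
    rw [fderiv_clm_apply hd (differentiableAt_const v)]
    simp
  have hc : ∀ {k : ℝ → ℝ → ℝ} {v : ℝ × ℝ}, (∀ s ∈ Ioo a b, ∀ x, k s x = fderiv ℝ F (s, x) v) →
      fderiv ℝ (fun p : ℝ × ℝ => k p.1 p.2) (t, θ) = (fderiv ℝ (fderiv ℝ F) (t, θ)).flip v := by
    intro k v hk
    rw [← key]
    apply Filter.EventuallyEq.fderiv_eq
    filter_upwards [strip_nhds ht θ] with p hp using hk p.1 hp.1 p.2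
  rw [hf.pth.pt_eq ht, hf.pt.pth_eq ht, hc (fun s hs x => hf.pth_eq hs x),
    hc (fun s hs x => hf.pt_eq hs x)]
  have hs : IsSymmSndFDerivAt ℝ F (t, θ) := (hf.contDiffAt ht θ).isSymmSndFDerivAt (by
    rw [minSmoothness_of_isRCLikeNormedField]; exact WithTop.coe_le_coe.2 le_top)
  exact hs _ _

lemma continuousOn (hf : Sm a b f) :
    ContinuousOn (fun p : ℝ × ℝ => f p.1 p.2) (Ioo a b ×ˢ (univ : Set ℝ)) := hf.1.continuousOn

lemma continuous_slice (hf : Sm a b f) {t : ℝ} (ht : t ∈ Ioo a b) : Continuous (f t) :=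
  continuous_iff_continuousAt.2 fun θ => (hf.dth ht θ).continuousAt

/-- By periodicity, a property of the values over a fundamental period holds everywhere. -/
lemma exists_Icc (hf : Sm a b f) {t : ℝ} (ht : t ∈ Ioo a b) (θ : ℝ) :
    ∃ x ∈ Icc 0 (2 * π), f t x = f t θ := by
  have hp : Function.Periodic (f t) (2 * π) := fun x => hf.2 t ht x
  obtain ⟨x, hx, hx'⟩ := hp.exists_mem_Ico₀ Real.two_pi_pos θ
  exact ⟨x, Ico_subset_Icc_self hx, hx'.symm⟩

lemma bdd_compact (hf : Sm a b f) {c d : ℝ} (hcd : Icc c d ⊆ Ioo a b) :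
    ∃ C, 0 ≤ C ∧ ∀ t ∈ Icc c d, ∀ θ, |f t θ| ≤ C := by
  have hK : IsCompact (Icc c d ×ˢ Icc (0 : ℝ) (2 * π)) := isCompact_Icc.prod isCompact_Icc
  obtain ⟨C, hC⟩ := hK.exists_bound_of_continuousOn
    (hf.continuousOn.mono (prod_mono hcd (subset_univ _)))
  refine ⟨max C 0, le_max_right _ _, fun t ht θ => ?_⟩
  obtain ⟨x, hx, hx'⟩ := hf.exists_Icc (hcd ht) θ
  rw [← hx']
  exact (hC (t, x) ⟨ht, hx⟩).trans (le_max_left _ _)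

lemma bdd_slice (hf : Sm a b f) {t : ℝ} (ht : t ∈ Ioo a b) : ∃ C, 0 ≤ C ∧ ∀ θ, |f t θ| ≤ C := by
  obtain ⟨C, h0, hC⟩ := hf.bdd_compact (c := t) (d := t) (by simpa using ht)
  exact ⟨C, h0, fun θ => hC t (by simp) θ⟩

lemma intInt (hf : Sm a b f) {t : ℝ} (ht : t ∈ Ioo a b) (c d : ℝ) :
    IntervalIntegrable (f t) volume c d := (hf.continuous_slice ht).intervalIntegrable c d

lemma hasDerivAt_integral (hf : Sm a b f) {t : ℝ} (ht : t ∈ Ioo a b) :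
    HasDerivAt (fun s => ∫ θ in (0 : ℝ)..(2 * π), f s θ)
      (∫ θ in (0 : ℝ)..(2 * π), _root_.pt f t θ) t := by
  obtain ⟨c, hc1, hc2⟩ := exists_between ht.1
  obtain ⟨d, hd1, hd2⟩ := exists_between ht.2
  have hsub : Icc c d ⊆ Ioo a b := fun x hx => ⟨hc1.trans_le hx.1, hx.2.trans_lt hd2⟩
  obtain ⟨C, -, hC⟩ := hf.pt.bdd_compact hsub
  refine (intervalIntegral.hasDerivAt_integral_of_dominated_loc_of_deriv_le (s := Icc c d)
    (F := fun s θ => f s θ) (F' := fun s θ => _root_.pt f s θ) (bound := fun _ => C)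
    (Icc_mem_nhds hc2 hd1) ?_ (hf.intInt ht _ _) ?_ ?_ ?_ ?_).2
  · filter_upwards [isOpen_Ioo.mem_nhds ht] with s hs
    exact (hf.continuous_slice hs).aestronglyMeasurable
  · exact (hf.pt.continuous_slice ht).aestronglyMeasurable
  · exact Eventually.of_forall fun θ _ s hs => hC s hs θ
  · exact intervalIntegrable_const
  · exact Eventually.of_forall fun θ _ s hs => hf.dt (hsub hs) θ

lemma integral_pth (hf : Sm a b f) {t : ℝ} (ht : t ∈ Ioo a b) :
    ∫ θ in (0 : ℝ)..(2 * π), _root_.pth f t θ = 0 := by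
  rw [intervalIntegral.integral_eq_sub_of_hasDerivAt (fun x _ => hf.dth ht x)
    (hf.pth.intInt ht _ _)]
  have := hf.2 t ht 0
  rw [zero_add] at this
  rw [this, sub_self]

/-- The oscillation over the circle is controlled by the `L¹` norm of the angular derivative. -/
lemma osc_le (hf : Sm a b f) (hg : Sm a b g) {t : ℝ} (ht : t ∈ Ioo a b)
    (h : ∀ θ, |_root_.pth f t θ| ≤ g t θ) (x y : ℝ) :
    f t x - f t y ≤ ∫ θ in (0 : ℝ)..(2 * π), g t θ := by
  obtain ⟨x', hx, hx'⟩ := hf.exists_Icc ht x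
  obtain ⟨y', hy, hy'⟩ := hf.exists_Icc ht y
  rw [← hx', ← hy', ← intervalIntegral.integral_eq_sub_of_hasDerivAt (fun z _ => hf.dth ht z)
    (hf.pth.intInt ht _ _)]
  refine (Real.le_norm_self _).trans ((intervalIntegral.norm_integral_le_integral_norm_uIoc).trans ?_)
  have hsub : uIoc y' x' ⊆ Ioc 0 (2 * π) := by
    rw [uIoc]
    exact Ioc_subset_Ioc (le_min hy.1 hx.1) (max_le hy.2 hx.2)
  rw [intervalIntegral.integral_of_le Real.two_pi_pos.le]
  have hgi := (intervalIntegrable_iff_integrableOn_Ioc_of_le Real.two_pi_pos.le).1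
    (hg.intInt ht 0 (2 * π))
  have hfi := (intervalIntegrable_iff_integrableOn_Ioc_of_le Real.two_pi_pos.le).1
    (hf.pth.intInt ht 0 (2 * π))
  calc ∫ z in uIoc y' x', |_root_.pth f t z| ≤ ∫ z in Ioc 0 (2 * π), |_root_.pth f t z| :=
        setIntegral_mono_set hfi.abs (Eventually.of_forall fun z => abs_nonneg _)
          (LE.le.eventuallyLE hsub)
    _ ≤ ∫ z in Ioc 0 (2 * π), g t z :=
        setIntegral_mono hfi.abs hgi h

lemma integral_mono (hf : Sm a b f) (hg : Sm a b g) {t : ℝ} (ht : t ∈ Ioo a b)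
    (h : ∀ θ, f t θ ≤ g t θ) :
    ∫ θ in (0 : ℝ)..(2 * π), f t θ ≤ ∫ θ in (0 : ℝ)..(2 * π), g t θ :=
  intervalIntegral.integral_mono_on Real.two_pi_pos.le (hf.intInt ht _ _) (hg.intInt ht _ _)
    fun x _ => h x

lemma bdd_of_pt_bdd (hf : Sm a b f) {t₀ : ℝ} (ht₀ : t₀ ∈ Ioo a b) {C : ℝ}
    (hC : ∀ t ∈ Ioo a b, ∀ θ, |_root_.pt f t θ| ≤ C) :
    ∃ C', ∀ t ∈ Ioo a b, ∀ θ, |f t θ| ≤ C' := by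
  obtain ⟨D, -, hD⟩ := hf.bdd_slice ht₀
  have hC0 : 0 ≤ C := (abs_nonneg _).trans (hC t₀ ht₀ 0)
  refine ⟨D + C * (b - a), fun t ht θ => ?_⟩
  have h1 := (convex_Ioo a b).norm_image_sub_le_of_norm_hasDerivWithin_le
    (f := fun s => f s θ) (fun s hs => (hf.dt hs θ).hasDerivWithinAt)
    (fun s hs => hC s hs θ) ht₀ ht
  simp only [Real.norm_eq_abs] at h1
  have h2 : |t - t₀| ≤ b - a := by
    rw [abs_le]; constructor <;> linarith [ht.1, ht.2, ht₀.1, ht₀.2]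
  have h3 : |f t θ| ≤ |f t₀ θ| + |f t θ - f t₀ θ| := by
    calc |f t θ| = |f t₀ θ + (f t θ - f t₀ θ)| := by ring_nf
      _ ≤ _ := abs_add_le _ _
  have h4 := mul_le_mul_of_nonneg_left h2 hC0
  linarith [hD θ]

end Sm

/-! ### A barrier principle for transport equations -/

/-- A comparison function `Φ` strictly above both `f` and `g` at time `t₀` stays above them as long
as, at any contact point (which is then a spatial maximum of the touching function, so that the
transport term vanishes), the time derivative of the touching function is smaller than `Φ'`. -/
lemma barrier_future {a b t₀ : ℝ} (ht₀ : t₀ ∈ Ioo a b) {f g : ℝ → ℝ → ℝ} (hf : Sm a b f)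
    (hg : Sm a b g) {Φ Φ' : ℝ → ℝ} (hΦ : ∀ t ∈ Ioo a b, HasDerivAt Φ (Φ' t) t)
    (hf0 : ∀ θ, f t₀ θ < Φ t₀) (hg0 : ∀ θ, g t₀ θ < Φ t₀)
    (hfs : ∀ t ∈ Ioo a b, t₀ < t → ∀ θ, f t θ = Φ t → g t θ ≤ Φ t → pth f t θ = 0 →
      pt f t θ < Φ' t)
    (hgs : ∀ t ∈ Ioo a b, t₀ < t → ∀ θ, g t θ = Φ t → f t θ ≤ Φ t → pth g t θ = 0 →
      pt g t θ < Φ' t) :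
    ∀ t ∈ Ioo a b, t₀ ≤ t → ∀ θ, f t θ < Φ t ∧ g t θ < Φ t := by
  -- the local contradiction at a first contact point
  have local_contra : ∀ {k l : ℝ → ℝ → ℝ}, Sm a b k → ∀ s ∈ Ioo a b, t₀ < s → ∀ θ,
      (∀ r ∈ Ioo a b, t₀ ≤ r → r < s → ∀ x, k r x < Φ r ∧ l r x < Φ r) →
      (∀ x, k s x ≤ Φ s) → k s θ = Φ s → (pth k s θ = 0 → pt k s θ < Φ' s) → False := by
    intro k l hk s hs h0s θ hbefore hle heq hstep
    have hmax : pth k s θ = 0 :=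
      IsLocalMax.deriv_eq_zero (Eventually.of_forall fun x => by simpa [heq] using hle x)
    have hneg := hstep hmax
    have hd : HasDerivAt (fun r => Φ r - k r θ) (Φ' s - pt k s θ) s := (hΦ s hs).sub (hk.dt hs θ)
    have hslope := hasDerivAt_iff_tendsto_slope.1 hd
    have hev : ∀ᶠ r in nhdsWithin s {s}ᶜ, 0 < slope (fun r => Φ r - k r θ) s r :=
      hslope.eventually (lt_mem_nhds (sub_pos.2 hneg))
    have hev2 : ∀ᶠ r in nhdsWithin s (Iio s), 0 < slope (fun r => Φ r - k r θ) s r :=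
      hev.filter_mono (nhdsWithin_mono _ fun r (hr : r < s) => hr.ne)
    have hev3 : ∀ᶠ r in nhdsWithin s (Iio s), r ∈ Ioo t₀ s := Ioo_mem_nhdsLT h0s
    obtain ⟨r, hr1, hr2⟩ := (hev2.and hev3).exists
    have hb := (hbefore r ⟨ht₀.1.trans hr2.1, hr2.2.trans hs.2⟩ hr2.1.le hr2.2 θ).1
    rw [slope_def_field, heq, sub_self, sub_zero] at hr1
    have : (Φ r - k r θ) / (r - s) < 0 := div_neg_of_pos_of_neg (by linarith) (by linarith [hr2.2])
    linarith
  by_contra hcon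
  push Not at hcon
  obtain ⟨t₁, ht₁, h01, θ₁, hbad⟩ := hcon
  have hsub : Icc t₀ t₁ ⊆ Ioo a b := fun x hx => ⟨ht₀.1.trans_le hx.1, hx.2.trans_lt ht₁.2⟩
  set K : Set (ℝ × ℝ) := (Icc t₀ t₁ ×ˢ Icc (0 : ℝ) (2 * π)) ∩
    {p | Φ p.1 ≤ max (f p.1 p.2) (g p.1 p.2)} with hKdef
  have hsub2 : Icc t₀ t₁ ×ˢ Icc (0 : ℝ) (2 * π) ⊆ Ioo a b ×ˢ (univ : Set ℝ) :=
    prod_mono hsub (subset_univ _)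
  have hΦc : ContinuousOn (fun p : ℝ × ℝ => Φ p.1) (Icc t₀ t₁ ×ˢ Icc (0 : ℝ) (2 * π)) := by
    have h1 : ContinuousOn Φ (Ioo a b) := fun t ht => (hΦ t ht).continuousAt.continuousWithinAt
    exact h1.comp continuousOn_fst fun p hp => hsub hp.1
  have hK : IsCompact K := by
    have hc : IsCompact (Icc t₀ t₁ ×ˢ Icc (0 : ℝ) (2 * π)) := isCompact_Icc.prod isCompact_Icc
    have hcl : IsClosed K :=
      hc.isClosed.isClosed_le hΦc (ContinuousOn.sup (hf.continuousOn.mono hsub2) (hg.continuousOn.mono hsub2))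
    exact hc.of_isClosed_subset hcl inter_subset_left
  have hKin : ∀ t ∈ Icc t₀ t₁, ∀ θ, Φ t ≤ max (f t θ) (g t θ) → ∃ x, (t, x) ∈ K := by
    intro t ht θ h
    rcases le_max_iff.1 h with h | h
    · obtain ⟨x, hx, hx'⟩ := hf.exists_Icc (hsub ht) θ
      exact ⟨x, ⟨ht, hx⟩, le_max_iff.2 (Or.inl (h.trans hx'.ge))⟩
    · obtain ⟨x, hx, hx'⟩ := hg.exists_Icc (hsub ht) θ
      exact ⟨x, ⟨ht, hx⟩, le_max_iff.2 (Or.inr (h.trans hx'.ge))⟩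
  have hne : K.Nonempty := by
    obtain ⟨x, hx⟩ := hKin t₁ ⟨h01, le_rfl⟩ θ₁ (by
      by_cases h : f t₁ θ₁ < Φ t₁
      · exact le_max_of_le_right (hbad h)
      · exact le_max_of_le_left (not_lt.1 h))
    exact ⟨_, hx⟩
  obtain ⟨⟨s, θ⟩, hsK, hmin⟩ := hK.exists_isMinOn hne continuousOn_fst
  have hsI : s ∈ Icc t₀ t₁ := hsK.1.1
  have hs : s ∈ Ioo a b := hsub hsI
  have hbefore : ∀ r ∈ Ioo a b, t₀ ≤ r → r < s → ∀ x, f r x < Φ r ∧ g r x < Φ r := by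
    intro r hr h0r hrs x
    by_contra hh
    have : Φ r ≤ max (f r x) (g r x) := by
      rw [le_max_iff]
      by_contra h2
      push Not at h2
      exact hh h2
    obtain ⟨y, hy⟩ := hKin r ⟨h0r, hrs.le.trans hsI.2⟩ x this
    exact absurd (hmin hy) (not_le.2 hrs)
  have h0s : t₀ < s := by
    rcases hsI.1.lt_or_eq with h | h
    · exact h
    · exfalso
      have := hsK.2
      simp only [mem_ofPred_eq, ← h, le_max_iff] at this
      rcases this with h | h
      · exact absurd (hf0 θ) (not_lt.2 h)
      · exact absurd (hg0 θ) (not_lt.2 h)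
  have hle : ∀ {k : ℝ → ℝ → ℝ}, Sm a b k →
      (∀ r ∈ Ioo a b, t₀ ≤ r → r < s → ∀ x, k r x < Φ r) → ∀ x, k s x ≤ Φ s := by
    intro k hk hb x
    have h1 : Tendsto (fun r => k r x) (nhdsWithin s (Iio s)) (nhds (k s x)) :=
      (hk.dt hs x).continuousAt.tendsto.mono_left nhdsWithin_le_nhds
    have h2 : Tendsto Φ (nhdsWithin s (Iio s)) (nhds (Φ s)) :=
      (hΦ s hs).continuousAt.tendsto.mono_left nhdsWithin_le_nhds
    refine le_of_tendsto_of_tendsto h1 h2 ?_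
    filter_upwards [Ioo_mem_nhdsLT h0s] with r hr
    exact (hb r ⟨ht₀.1.trans hr.1, hr.2.trans hs.2⟩ hr.1.le hr.2 x).le
  have hlef := hle hf fun r hr h1 h2 x => (hbefore r hr h1 h2 x).1
  have hleg := hle hg fun r hr h1 h2 x => (hbefore r hr h1 h2 x).2
  rcases le_max_iff.1 (show Φ s ≤ max (f s θ) (g s θ) from hsK.2) with h | h
  · have heq := le_antisymm (hlef θ) h
    exact local_contra hf s hs h0s θ hbefore hlef heq (hfs s hs h0s θ heq (hleg θ))
  · have heq := le_antisymm (hleg θ) h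
    exact local_contra hg s hs h0s θ (fun r hr h1 h2 x => (hbefore r hr h1 h2 x).symm) hleg heq
      (hgs s hs h0s θ heq (hlef θ))

lemma hasDerivAt_reflect {f : ℝ → ℝ} {d t : ℝ} (h : HasDerivAt f d (-t)) :
    HasDerivAt (fun s => f (-s)) (-d) t := by
  have h1 := HasDerivAt.comp t h (hasDerivAt_neg t)
  rwa [mul_neg_one] at h1

lemma Sm.reflect {a b : ℝ} {f : ℝ → ℝ → ℝ} (hf : Sm a b f) :
    Sm (-b) (-a) (fun t θ => f (-t) θ) := by
  constructor
  · have h1 : ContDiffOn ℝ (⊤ : ℕ∞) (fun p : ℝ × ℝ => (-p.1, p.2))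
        (Ioo (-b) (-a) ×ˢ (univ : Set ℝ)) :=
      (contDiff_fst.neg.prodMk contDiff_snd).contDiffOn
    exact hf.1.comp h1 fun p hp => ⟨⟨by linarith [hp.1.2], by linarith [hp.1.1]⟩, mem_univ _⟩
  · intro t ht θ
    exact hf.2 (-t) ⟨by linarith [ht.2], by linarith [ht.1]⟩ θ

/-- The time-reversed form of `barrier_future`. -/
lemma barrier_past {a b t₀ : ℝ} (ht₀ : t₀ ∈ Ioo a b) {f g : ℝ → ℝ → ℝ} (hf : Sm a b f)
    (hg : Sm a b g) {Φ Φ' : ℝ → ℝ} (hΦ : ∀ t ∈ Ioo a b, HasDerivAt Φ (Φ' t) t)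
    (hf0 : ∀ θ, f t₀ θ < Φ t₀) (hg0 : ∀ θ, g t₀ θ < Φ t₀)
    (hfs : ∀ t ∈ Ioo a b, t < t₀ → ∀ θ, f t θ = Φ t → g t θ ≤ Φ t → pth f t θ = 0 →
      Φ' t < pt f t θ)
    (hgs : ∀ t ∈ Ioo a b, t < t₀ → ∀ θ, g t θ = Φ t → f t θ ≤ Φ t → pth g t θ = 0 →
      Φ' t < pt g t θ) :
    ∀ t ∈ Ioo a b, t ≤ t₀ → ∀ θ, f t θ < Φ t ∧ g t θ < Φ t := by
  have hm : ∀ {t : ℝ}, t ∈ Ioo (-b) (-a) → -t ∈ Ioo a b := fun ht =>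
    ⟨by linarith [ht.2], by linarith [ht.1]⟩
  have hpt : ∀ {k : ℝ → ℝ → ℝ}, Sm a b k → ∀ t ∈ Ioo (-b) (-a), ∀ θ,
      pt (fun t θ => k (-t) θ) t θ = - pt k (-t) θ := by
    intro k hk t ht θ
    exact (hasDerivAt_reflect (hk.dt (hm ht) θ)).deriv
  have key := barrier_future (a := -b) (b := -a) (t₀ := -t₀)
    ⟨by linarith [ht₀.2], by linarith [ht₀.1]⟩ hf.reflect hg.reflect
    (Φ := fun t => Φ (-t)) (Φ' := fun t => - Φ' (-t))
    (fun t ht => hasDerivAt_reflect (hΦ (-t) (hm ht)))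
    (by simpa using hf0) (by simpa using hg0)
    (fun t ht h0 θ h1 h2 h3 => by
      rw [hpt hf t ht]
      exact neg_lt_neg (hfs (-t) (hm ht) (by linarith) θ h1 h2 h3))
    (fun t ht h0 θ h1 h2 h3 => by
      rw [hpt hg t ht]
      exact neg_lt_neg (hgs (-t) (hm ht) (by linarith) θ h1 h2 h3))
  intro t ht h θ
  simpa using key (-t) ⟨by linarith [ht.2], by linarith [ht.1]⟩ (by linarith) θ

/-! ### The first-order system along null directions -/

/-- Squared length `𝓔±` of a vector of null derivatives in an orthonormal target frame. -/
def nrm (p : Fin 4 → ℝ → ℝ → ℝ) (t θ : ℝ) : ℝ :=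
  p 0 t θ ^ 2 + p 1 t θ ^ 2 + p 2 t θ ^ 2 + p 3 t θ ^ 2

/-- Half of the first-order null system. In the application `h = ±√α` and
`p = (D U, e^{2U} D A / (2t), D φ / 2, e^{λφ} D σ / 2)` with `D = ∂ₜ + h ∂_θ`; `q` is the same
vector formed with `∂ₜ - h ∂_θ`, and `V = α Q² e^{2λφ + 2(η - U)} / 4`. The components of `p` are
transported along `∂ₜ - h ∂_θ`, and `V` along `∂ₜ + h ∂_θ`. -/
structure HalfSys (a b lam : ℝ) (h V : ℝ → ℝ → ℝ) (p q : Fin 4 → ℝ → ℝ → ℝ) : Prop where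
  smp : ∀ i, Sm a b (p i)
  e0 : ∀ t ∈ Ioo a b, ∀ θ, pt (p 0) t θ = h t θ * pth (p 0) t θ
    - (p 0 t θ + q 0 t θ) / (2 * t) - 2 * t * V t θ * p 0 t θ + 2 * p 1 t θ * q 1 t θ + V t θ
  e1 : ∀ t ∈ Ioo a b, ∀ θ, pt (p 1) t θ = h t θ * pth (p 1) t θ
    + (q 1 t θ - p 1 t θ) / (2 * t) - 2 * t * V t θ * p 1 t θ - 2 * p 0 t θ * q 1 t θ
  e2 : ∀ t ∈ Ioo a b, ∀ θ, pt (p 2) t θ = h t θ * pth (p 2) t θ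
    - (p 2 t θ + q 2 t θ) / (2 * t) - 2 * t * V t θ * p 2 t θ + 2 * lam * p 3 t θ * q 3 t θ
    - 2 * lam * V t θ
  e3 : ∀ t ∈ Ioo a b, ∀ θ, pt (p 3) t θ = h t θ * pth (p 3) t θ
    - (p 3 t θ + q 3 t θ) / (2 * t) - 2 * t * V t θ * p 3 t θ - 2 * lam * p 2 t θ * q 3 t θ
  eV : ∀ t ∈ Ioo a b, ∀ θ, pt V t θ + h t θ * pth V t θ =
    V t θ * (2 * t * (nrm p t θ - V t θ) + 4 * lam * p 2 t θ - 2 * p 0 t θ)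

/-- The complete first-order null system. The timelike convergence condition enters only through
its consequence `tcc`. -/
structure NullSys (a b lam : ℝ) (h V : ℝ → ℝ → ℝ) (p q : Fin 4 → ℝ → ℝ → ℝ) : Prop where
  a_pos : 0 < a
  lam_le : |lam| ≤ 1 / 2
  smh : Sm a b h
  smV : Sm a b V
  hpos : ∀ t ∈ Ioo a b, ∀ θ, 0 < h t θ
  Vpos : ∀ t ∈ Ioo a b, ∀ θ, 0 < V t θ
  eh : ∀ t ∈ Ioo a b, ∀ θ, pt h t θ = - (2 * t * V t θ * h t θ)
  half1 : HalfSys a b lam h V p q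
  half2 : HalfSys a b lam (fun t θ => - h t θ) V q p
  tcc : ∀ t ∈ Ioo a b, ∀ θ, V t θ ≤ nrm p t θ + nrm q t θ

lemma nrm_nonneg (p : Fin 4 → ℝ → ℝ → ℝ) (t θ : ℝ) : 0 ≤ nrm p t θ := by
  unfold nrm; positivity

lemma sm_nrm {a b : ℝ} {p : Fin 4 → ℝ → ℝ → ℝ} (hp : ∀ i, Sm a b (p i)) : Sm a b (nrm p) :=
  ((((hp 0).pow 2).add ((hp 1).pow 2)).add ((hp 2).pow 2)).add ((hp 3).pow 2)

lemma pt_nrm {a b : ℝ} {p : Fin 4 → ℝ → ℝ → ℝ} (hp : ∀ i, Sm a b (p i)) {t : ℝ}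
    (ht : t ∈ Ioo a b) (θ : ℝ) : pt (nrm p) t θ =
      2 * (p 0 t θ * pt (p 0) t θ + p 1 t θ * pt (p 1) t θ + p 2 t θ * pt (p 2) t θ
        + p 3 t θ * pt (p 3) t θ) := by
  have h1 := (((((hp 0).dt ht θ).pow 2).add (((hp 1).dt ht θ).pow 2)).add
    (((hp 2).dt ht θ).pow 2)).add (((hp 3).dt ht θ).pow 2)
  refine (HasDerivAt.deriv h1).trans ?_
  norm_num; ring

lemma pth_nrm {a b : ℝ} {p : Fin 4 → ℝ → ℝ → ℝ} (hp : ∀ i, Sm a b (p i)) {t : ℝ}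
    (ht : t ∈ Ioo a b) (θ : ℝ) : pth (nrm p) t θ =
      2 * (p 0 t θ * pth (p 0) t θ + p 1 t θ * pth (p 1) t θ + p 2 t θ * pth (p 2) t θ
        + p 3 t θ * pth (p 3) t θ) := by
  have h1 := (((((hp 0).dth ht θ).pow 2).add (((hp 1).dth ht θ).pow 2)).add
    (((hp 2).dth ht θ).pow 2)).add (((hp 3).dth ht θ).pow 2)
  refine (HasDerivAt.deriv h1).trans ?_
  norm_num; ring

/-- The friction term produced by the factors `1/t` in the wave equations. -/
def fric (p q : Fin 4 → ℝ → ℝ → ℝ) (t θ : ℝ) : ℝ :=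
  p 0 t θ * (p 0 t θ + q 0 t θ) + p 1 t θ * (p 1 t θ - q 1 t θ)
    + p 2 t θ * (p 2 t θ + q 2 t θ) + p 3 t θ * (p 3 t θ + q 3 t θ)

lemma abs_fric_le (p q : Fin 4 → ℝ → ℝ → ℝ) (t θ : ℝ) :
    |fric p q t θ| ≤ (3 / 2) * nrm p t θ + (1 / 2) * nrm q t θ := by
  unfold fric nrm
  rw [abs_le]
  constructor
  · nlinarith [sq_nonneg (p 0 t θ + q 0 t θ), sq_nonneg (p 1 t θ - q 1 t θ),
      sq_nonneg (p 2 t θ + q 2 t θ), sq_nonneg (p 3 t θ + q 3 t θ), sq_nonneg (p 0 t θ),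
      sq_nonneg (p 1 t θ), sq_nonneg (p 2 t θ), sq_nonneg (p 3 t θ)]
  · nlinarith [sq_nonneg (p 0 t θ - q 0 t θ), sq_nonneg (p 1 t θ + q 1 t θ),
      sq_nonneg (p 2 t θ - q 2 t θ), sq_nonneg (p 3 t θ - q 3 t θ)]

lemma fric_add_nonneg (p q : Fin 4 → ℝ → ℝ → ℝ) (t θ : ℝ) :
    0 ≤ fric p q t θ + fric q p t θ := by
  have : fric p q t θ + fric q p t θ = (p 0 t θ + q 0 t θ) ^ 2 + (p 1 t θ - q 1 t θ) ^ 2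
      + (p 2 t θ + q 2 t θ) ^ 2 + (p 3 t θ + q 3 t θ) ^ 2 := by
    unfold fric; ring
  rw [this]; positivity

lemma sm_fric {a b : ℝ} {p q : Fin 4 → ℝ → ℝ → ℝ} (hp : ∀ i, Sm a b (p i))
    (hq : ∀ i, Sm a b (q i)) : Sm a b (fric p q) :=
  ((((hp 0).mul ((hp 0).add (hq 0))).add ((hp 1).mul ((hp 1).sub (hq 1)))).add
    ((hp 2).mul ((hp 2).add (hq 2)))).add ((hp 3).mul ((hp 3).add (hq 3)))

/-- Transport of `𝓔±`: the wave-map interaction terms cancel. -/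
lemma HalfSys.pt_nrm_eq {a b lam : ℝ} {h V : ℝ → ℝ → ℝ} {p q : Fin 4 → ℝ → ℝ → ℝ}
    (H : HalfSys a b lam h V p q) (ha : 0 < a) {t : ℝ} (ht : t ∈ Ioo a b) (θ : ℝ) :
    pt (nrm p) t θ = h t θ * pth (nrm p) t θ - 4 * t * V t θ * nrm p t θ
      + 2 * V t θ * (p 0 t θ - 2 * lam * p 2 t θ) - fric p q t θ / t := by
  have ht0 : t ≠ 0 := (ha.trans ht.1).ne'
  rw [pt_nrm H.smp ht, pth_nrm H.smp ht, H.e0 t ht, H.e1 t ht, H.e2 t ht, H.e3 t ht]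
  unfold fric nrm
  field_simp
  ring

lemma two_mul_abs_le {t x : ℝ} (ht : 0 < t) : |x| ≤ t / 2 * x ^ 2 + 1 / (2 * t) := by
  have h1 : t / 2 * x ^ 2 + 1 / (2 * t) - |x| = (t * |x| - 1) ^ 2 / (2 * t) := by
    rw [← sq_abs x]; field_simp; ring
  have h2 : 0 ≤ (t * |x| - 1) ^ 2 / (2 * t) := by positivity
  linarith

lemma abs_lin_le {lam x y : ℝ} (hlam : |lam| ≤ 1 / 2) : |x - 2 * lam * y| ≤ |x| + |y| := by
  have h1 : |2 * lam * y| ≤ |y| := by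
    rw [abs_mul, abs_mul, abs_two]
    nlinarith [abs_nonneg y]
  calc |x - 2 * lam * y| ≤ |x| + |2 * lam * y| := abs_sub _ _
    _ ≤ _ := by linarith

/-- At a contact point in the future direction the damping `-4tV𝓔` beats the source. -/
lemma HalfSys.pt_nrm_le {a b lam : ℝ} {h V : ℝ → ℝ → ℝ} {p q : Fin 4 → ℝ → ℝ → ℝ}
    (H : HalfSys a b lam h V p q) (ha : 0 < a) (hlam : |lam| ≤ 1 / 2) {t : ℝ} (ht : t ∈ Ioo a b)
    (θ Φ : ℝ) (hV : 0 < V t θ) (h1 : nrm p t θ = Φ) (h2 : nrm q t θ ≤ Φ)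
    (h3 : pth (nrm p) t θ = 0) (hΦ : 1 / a ^ 2 ≤ Φ) : pt (nrm p) t θ ≤ 2 / a * Φ := by
  have ht0 : 0 < t := ha.trans ht.1
  rw [H.pt_nrm_eq ha ht, h3, mul_zero, h1]
  have hf := abs_fric_le p q t θ
  have hl : p 0 t θ - 2 * lam * p 2 t θ ≤ t / 2 * Φ + 1 / t := by
    have e1 := (le_abs_self _).trans (abs_lin_le (x := p 0 t θ) (y := p 2 t θ) hlam)
    have e2 := two_mul_abs_le (x := p 0 t θ) ht0
    have e3 := two_mul_abs_le (x := p 2 t θ) ht0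
    have e4 : p 0 t θ ^ 2 + p 2 t θ ^ 2 ≤ Φ := by
      rw [← h1]; unfold nrm; nlinarith [sq_nonneg (p 1 t θ), sq_nonneg (p 3 t θ)]
    have e5 : 1 / t = 1 / (2 * t) + 1 / (2 * t) := by field_simp; ring
    nlinarith
  have hΦ0 : 0 ≤ Φ := by rw [← h1]; exact nrm_nonneg _ _ _
  have h5 : 1 / t ≤ t * Φ := by
    have : 1 ≤ a ^ 2 * Φ := by
      rw [div_le_iff₀ (by positivity)] at hΦ; linarith
    rw [div_le_iff₀ ht0]
    have : a ^ 2 * Φ ≤ t ^ 2 * Φ :=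
      mul_le_mul_of_nonneg_right (pow_le_pow_left₀ ha.le ht.1.le 2) hΦ0
    nlinarith
  have h6 : - fric p q t θ / t ≤ 2 / a * Φ := by
    have e1 : - fric p q t θ ≤ 2 * Φ := by
      have := (abs_le.1 hf).1
      linarith
    calc - fric p q t θ / t ≤ 2 * Φ / t := by gcongr
      _ ≤ 2 * Φ / a := by gcongr; exact ht.1.le
      _ = _ := by ring
  have h7 : V t θ * (p 0 t θ - 2 * lam * p 2 t θ) ≤ V t θ * (t / 2 * Φ + 1 / t) := by gcongr
  have h8 : V t θ * (t / 2 * Φ + 1 / t) ≤ V t θ * (2 * t * Φ) := by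
    have : 0 ≤ t * Φ := by positivity
    gcongr; linarith
  rw [neg_div] at h6
  linarith

/-- At a contact point in the past direction the growth is at most linear in `𝓔`, with a rate
proportional to `1 + V`. -/
lemma HalfSys.le_pt_nrm {a b lam : ℝ} {h V : ℝ → ℝ → ℝ} {p q : Fin 4 → ℝ → ℝ → ℝ}
    (H : HalfSys a b lam h V p q) (ha : 0 < a) (hlam : |lam| ≤ 1 / 2) {t : ℝ} (ht : t ∈ Ioo a b)
    (θ Φ : ℝ) (hV : 0 < V t θ) (h1 : nrm p t θ = Φ) (h2 : nrm q t θ ≤ Φ)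
    (h3 : pth (nrm p) t θ = 0) (hΦ : 1 ≤ Φ) :
    - ((4 * b + 3) * V t θ + 2 / a) * Φ ≤ pt (nrm p) t θ := by
  have ht0 : 0 < t := ha.trans ht.1
  rw [H.pt_nrm_eq ha ht, h3, mul_zero, h1]
  have hf := abs_fric_le p q t θ
  have hl : - (Φ / 2 + 1) ≤ p 0 t θ - 2 * lam * p 2 t θ := by
    have e1 := (abs_le.1 (abs_lin_le (x := p 0 t θ) (y := p 2 t θ) hlam)).1
    have e2 := two_mul_abs_le (x := p 0 t θ) one_pos
    have e3 := two_mul_abs_le (x := p 2 t θ) one_pos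
    have e4 : p 0 t θ ^ 2 + p 2 t θ ^ 2 ≤ Φ := by
      rw [← h1]; unfold nrm; nlinarith [sq_nonneg (p 1 t θ), sq_nonneg (p 3 t θ)]
    linarith
  have h6 : fric p q t θ / t ≤ 2 / a * Φ := by
    have e1 : fric p q t θ ≤ 2 * Φ := by
      have := (abs_le.1 hf).2
      linarith
    calc fric p q t θ / t ≤ 2 * Φ / t := by gcongr
      _ ≤ 2 * Φ / a := by gcongr; exact ht.1.le
      _ = _ := by ring
  have h7 := mul_le_mul_of_nonneg_left hl hV.le
  have h8 : t * (V t θ * Φ) ≤ b * (V t θ * Φ) :=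
    mul_le_mul_of_nonneg_right ht.2.le (by positivity)
  have h9 : V t θ * 1 ≤ V t θ * Φ := by gcongr
  nlinarith

/-! ### Energy estimates towards the past -/

lemma le_of_deriv_nonpos {a b t₀ : ℝ} (ht₀ : t₀ ∈ Ioo a b) {F F' : ℝ → ℝ}
    (hF : ∀ t ∈ Ioo a b, HasDerivAt F (F' t) t) (hneg : ∀ t ∈ Ioo a b, t ≤ t₀ → F' t ≤ 0) {t : ℝ}
    (ht : t ∈ Ioo a b) (h : t ≤ t₀) : F t₀ ≤ F t := by
  have hsub : Icc t t₀ ⊆ Ioo a b := fun x hx => ⟨ht.1.trans_le hx.1, hx.2.trans_lt ht₀.2⟩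
  have : AntitoneOn F (Icc t t₀) := by
    apply antitoneOn_of_deriv_nonpos (convex_Icc t t₀)
    · exact fun x hx => (hF x (hsub hx)).continuousAt.continuousWithinAt
    · exact fun x hx => (hF x (hsub (interior_subset hx))).differentiableAt.differentiableWithinAt
    · intro x hx
      have hx' := interior_subset hx
      rw [(hF x (hsub hx')).deriv]
      exact hneg x (hsub hx') hx'.2
  exact this ⟨le_rfl, h⟩ ⟨h, le_rfl⟩ h

/-- Integrated form of a local balance law `∂ₜ e = ∂_θ j + r`. -/
lemma hasDerivAt_balance {a b : ℝ} {e j r : ℝ → ℝ → ℝ} (he : Sm a b e) (hj : Sm a b j)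
    (hr : Sm a b r) (hbal : ∀ t ∈ Ioo a b, ∀ θ, pt e t θ = pth j t θ + r t θ) {t : ℝ}
    (ht : t ∈ Ioo a b) :
    HasDerivAt (fun s => ∫ θ in (0 : ℝ)..(2 * π), e s θ) (∫ θ in (0 : ℝ)..(2 * π), r t θ) t := by
  have h1 := he.hasDerivAt_integral ht
  have h2 : ∫ θ in (0 : ℝ)..(2 * π), pt e t θ = ∫ θ in (0 : ℝ)..(2 * π), r t θ := by
    have : (fun θ => pt e t θ) = fun θ => pth j t θ + r t θ := funext (hbal t ht)
    rw [this, intervalIntegral.integral_add (hj.pth.intInt ht _ _) (hr.intInt ht _ _),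
      hj.integral_pth ht, zero_add]
  rwa [h2] at h1

namespace NullSys

variable {a b lam : ℝ} {h V : ℝ → ℝ → ℝ} {p q : Fin 4 → ℝ → ℝ → ℝ}

lemma h_ne (N : NullSys a b lam h V p q) : ∀ t ∈ Ioo a b, ∀ θ, h t θ ≠ 0 :=
  fun t ht θ => (N.hpos t ht θ).ne'

/-- Density of the kinetic energy `Ẽ`. -/
def kin (h : ℝ → ℝ → ℝ) (p q : Fin 4 → ℝ → ℝ → ℝ) (t θ : ℝ) : ℝ :=
  (1 / 2 * (nrm p t θ + nrm q t θ)) / h t θ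

lemma sm_kin (N : NullSys a b lam h V p q) : Sm a b (kin h p q) :=
  ((Sm.const (1 / 2)).mul ((sm_nrm N.half1.smp).add (sm_nrm N.half2.smp))).div N.smh N.h_ne

lemma sm_pot (N : NullSys a b lam h V p q) : Sm a b (fun t θ => V t θ / h t θ) :=
  N.smV.div N.smh N.h_ne

lemma sm_len (N : NullSys a b lam h V p q) : Sm a b (fun t θ => 1 / h t θ) :=
  (Sm.const 1).div N.smh N.h_ne

lemma sm_flux (N : NullSys a b lam h V p q) :
    Sm a b (fun t θ => 1 / 2 * (nrm p t θ - nrm q t θ)) :=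
  (Sm.const (1 / 2)).mul ((sm_nrm N.half1.smp).sub (sm_nrm N.half2.smp))

lemma t_ne (N : NullSys a b lam h V p q) : ∀ t ∈ Ioo a b, ∀ _ : ℝ, t ≠ 0 :=
  fun _ ht _ => (N.a_pos.trans ht.1).ne'

/-- Source term of the balance law of the kinetic energy density. -/
def kinSource (lam : ℝ) (h V : ℝ → ℝ → ℝ) (p q : Fin 4 → ℝ → ℝ → ℝ) (t θ : ℝ) : ℝ :=
  (V t θ * (p 0 t θ + q 0 t θ - 2 * lam * (p 2 t θ + q 2 t θ)
      - t * (nrm p t θ + nrm q t θ)) - (fric p q t θ + fric q p t θ) / (2 * t)) / h t θ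

lemma sm_fricsum (N : NullSys a b lam h V p q) :
    Sm a b (fun t θ => (fric p q t θ + fric q p t θ) / (2 * t)) :=
  ((sm_fric N.half1.smp N.half2.smp).add (sm_fric N.half2.smp N.half1.smp)).div
    ((Sm.const 2).mul Sm.time) fun t ht θ => mul_ne_zero two_ne_zero (N.t_ne t ht θ)

lemma sm_kinSource (N : NullSys a b lam h V p q) : Sm a b (kinSource lam h V p q) :=
  ((N.smV.mul ((((N.half1.smp 0).add (N.half2.smp 0)).sub
    ((Sm.const (2 * lam)).mul ((N.half1.smp 2).add (N.half2.smp 2)))).sub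
      (Sm.time.mul ((sm_nrm N.half1.smp).add (sm_nrm N.half2.smp))))).sub
        N.sm_fricsum).div N.smh N.h_ne

lemma pt_kin (N : NullSys a b lam h V p q) : ∀ t ∈ Ioo a b, ∀ θ,
    pt (kin h p q) t θ = pth (fun t θ => 1 / 2 * (nrm p t θ - nrm q t θ)) t θ
      + kinSource lam h V p q t θ := by
  intro t ht θ
  have ht0 : t ≠ 0 := N.t_ne t ht θ
  have hh : h t θ ≠ 0 := N.h_ne t ht θ
  have sp := sm_nrm N.half1.smp
  have sq := sm_nrm N.half2.smp
  have h1 : pt (kin h p q) t θ = _ := HasDerivAt.deriv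
    ((((sp.dt ht θ).add (sq.dt ht θ)).const_mul (1 / 2)).div (N.smh.dt ht θ) hh)
  have h2 : pth (fun t θ => 1 / 2 * (nrm p t θ - nrm q t θ)) t θ = _ := HasDerivAt.deriv
    (((sp.dth ht θ).sub (sq.dth ht θ)).const_mul (1 / 2))
  rw [h1, h2, N.half1.pt_nrm_eq N.a_pos ht, N.half2.pt_nrm_eq N.a_pos ht, N.eh t ht]
  simp only [kinSource, Pi.add_apply]
  field_simp
  ring

lemma pt_V (N : NullSys a b lam h V p q) {t : ℝ} (ht : t ∈ Ioo a b) (θ : ℝ) :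
    pt V t θ = V t θ * (t * (nrm p t θ + nrm q t θ) - 2 * t * V t θ
      + 2 * lam * (p 2 t θ + q 2 t θ) - (p 0 t θ + q 0 t θ)) := by
  have h1 := N.half1.eV t ht θ
  have h2 := N.half2.eV t ht θ
  linear_combination (1 / 2) * h1 + (1 / 2) * h2

lemma pth_V (N : NullSys a b lam h V p q) {t : ℝ} (ht : t ∈ Ioo a b) (θ : ℝ) :
    pth V t θ = V t θ / h t θ * (t * (nrm p t θ - nrm q t θ)
      + 2 * lam * (p 2 t θ - q 2 t θ) - (p 0 t θ - q 0 t θ)) := by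
  have h1 := N.half1.eV t ht θ
  have h2 := N.half2.eV t ht θ
  have hh := N.h_ne t ht θ
  field_simp
  linear_combination (1 / 2) * h1 - (1 / 2) * h2

lemma pt_pot (N : NullSys a b lam h V p q) : ∀ t ∈ Ioo a b, ∀ θ,
    pt (fun t θ => V t θ / h t θ) t θ = V t θ / h t θ * (t * (nrm p t θ + nrm q t θ)
      + 2 * lam * (p 2 t θ + q 2 t θ) - (p 0 t θ + q 0 t θ)) := by
  intro t ht θ
  have hh : h t θ ≠ 0 := N.h_ne t ht θ
  have h1 : pt (fun t θ => V t θ / h t θ) t θ = _ := HasDerivAt.deriv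
    ((N.smV.dt ht θ).div (N.smh.dt ht θ) hh)
  rw [h1, N.pt_V ht, N.eh t ht]
  field_simp
  ring

lemma pt_len (N : NullSys a b lam h V p q) : ∀ t ∈ Ioo a b, ∀ θ,
    pt (fun t θ => 1 / h t θ) t θ = 2 * t * (V t θ / h t θ) := by
  intro t ht θ
  have hh : h t θ ≠ 0 := N.h_ne t ht θ
  have h1 : pt (fun t θ => 1 / h t θ) t θ = _ := HasDerivAt.deriv
    ((hasDerivAt_const t (1 : ℝ)).div (N.smh.dt ht θ) hh)
  rw [h1, N.eh t ht]
  field_simp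
  ring

/-- Total energy density. -/
def tot (h V : ℝ → ℝ → ℝ) (p q : Fin 4 → ℝ → ℝ → ℝ) (t θ : ℝ) : ℝ :=
  kin h p q t θ + V t θ / h t θ

lemma sm_tot (N : NullSys a b lam h V p q) : Sm a b (tot h V p q) := N.sm_kin.add N.sm_pot

/-- The potential contributions cancel in the balance of the total energy; only friction is
left. -/
lemma pt_tot (N : NullSys a b lam h V p q) : ∀ t ∈ Ioo a b, ∀ θ,
    pt (tot h V p q) t θ = pth (fun t θ => 1 / 2 * (nrm p t θ - nrm q t θ)) t θ
      + - ((fric p q t θ + fric q p t θ) / (2 * t) / h t θ) := by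
  intro t ht θ
  have h1 : pt (tot h V p q) t θ = _ := HasDerivAt.deriv
    ((N.sm_kin.dt ht θ).add (N.sm_pot.dt ht θ))
  rw [h1, N.pt_kin t ht, N.pt_pot t ht, kinSource]
  ring

/-- Integral over the circle. -/
def circ (f : ℝ → ℝ → ℝ) (t : ℝ) : ℝ := ∫ θ in (0 : ℝ)..(2 * π), f t θ

lemma circ_mono {f g : ℝ → ℝ → ℝ} (hf : Sm a b f) (hg : Sm a b g) {t : ℝ} (ht : t ∈ Ioo a b)
    (hfg : ∀ θ, f t θ ≤ g t θ) : circ f t ≤ circ g t := hf.integral_mono hg ht hfg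

lemma circ_pos {f : ℝ → ℝ → ℝ} (hf : Sm a b f) {t : ℝ} (ht : t ∈ Ioo a b)
    (h0 : ∀ θ, 0 < f t θ) : 0 < circ f t :=
  intervalIntegral.intervalIntegral_pos_of_pos (hf.intInt ht _ _) h0 Real.two_pi_pos

lemma circ_mul (c : ℝ) (f : ℝ → ℝ → ℝ) (t : ℝ) : circ (fun s θ => c * f s θ) t = c * circ f t :=
  intervalIntegral.integral_const_mul c _

lemma circ_add {f g : ℝ → ℝ → ℝ} (hf : Sm a b f) (hg : Sm a b g) {t : ℝ} (ht : t ∈ Ioo a b) :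
    circ (fun s θ => f s θ + g s θ) t = circ f t + circ g t :=
  intervalIntegral.integral_add (hf.intInt ht _ _) (hg.intInt ht _ _)

lemma kin_nonneg (N : NullSys a b lam h V p q) {t : ℝ} (ht : t ∈ Ioo a b) (θ : ℝ) :
    0 ≤ kin h p q t θ := by
  have := nrm_nonneg p t θ
  have := nrm_nonneg q t θ
  have := N.hpos t ht θ
  unfold kin
  positivity

lemma pot_pos (N : NullSys a b lam h V p q) {t : ℝ} (ht : t ∈ Ioo a b) (θ : ℝ) :
    0 < V t θ / h t θ := div_pos (N.Vpos t ht θ) (N.hpos t ht θ)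

lemma sm_decay (N : NullSys a b lam h V p q) :
    Sm a b (fun t θ => - ((fric p q t θ + fric q p t θ) / (2 * t) / h t θ)) :=
  (N.sm_fricsum.div N.smh N.h_ne).neg

lemma hasDerivAt_tot (N : NullSys a b lam h V p q) {t : ℝ} (ht : t ∈ Ioo a b) :
    HasDerivAt (circ (tot h V p q))
      (circ (fun t θ => - ((fric p q t θ + fric q p t θ) / (2 * t) / h t θ)) t) t :=
  hasDerivAt_balance N.sm_tot N.sm_flux N.sm_decay N.pt_tot ht

lemma tot_anti (N : NullSys a b lam h V p q) {t t₀ : ℝ} (ht : t ∈ Ioo a b) (ht₀ : t₀ ∈ Ioo a b)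
    (hle : t ≤ t₀) : circ (tot h V p q) t₀ ≤ circ (tot h V p q) t := by
  refine le_of_deriv_nonpos ht₀ (fun s hs => N.hasDerivAt_tot hs) (fun s hs _ => ?_) ht hle
  have h1 := circ_mono N.sm_decay (Sm.const 0) hs (fun θ => by
    have h1 := fric_add_nonneg p q s θ
    have h2 := N.hpos s hs θ
    have h3 : 0 < s := N.a_pos.trans hs.1
    rw [neg_nonpos]; positivity)
  simpa [circ] using h1

lemma tot_bdd (N : NullSys a b lam h V p q) {t t₀ : ℝ} (ht : t ∈ Ioo a b) (ht₀ : t₀ ∈ Ioo a b)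
    (hle : t ≤ t₀) : circ (tot h V p q) t ≤ circ (tot h V p q) t₀ * exp (2 / a * (b - a)) := by
  have hpos : ∀ s ∈ Ioo a b, 0 < circ (tot h V p q) s := fun s hs =>
    circ_pos N.sm_tot hs fun θ => add_pos_of_nonneg_of_pos (N.kin_nonneg hs θ) (N.pot_pos hs θ)
  have hD : ∀ s ∈ Ioo a b, HasDerivAt (fun s => - (circ (tot h V p q) s * exp (2 / a * s))) _ s :=
    fun s hs => ((N.hasDerivAt_tot hs).mul
      (((hasDerivAt_id s).const_mul (2 / a)).exp)).neg
  have h1 := le_of_deriv_nonpos ht₀ hD (fun s hs _ => ?_) ht hle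
  · have h2 : circ (tot h V p q) t * exp (2 / a * t) ≤ circ (tot h V p q) t₀ * exp (2 / a * t₀) := by
      linarith
    have h3 : circ (tot h V p q) t
        ≤ circ (tot h V p q) t₀ * exp (2 / a * t₀) * exp (- (2 / a * t)) := by
      rw [exp_neg, ← div_eq_mul_inv, le_div_iff₀ (exp_pos _)]; exact h2
    rw [mul_assoc, ← exp_add] at h3
    refine h3.trans (mul_le_mul_of_nonneg_left (exp_le_exp.2 ?_) (hpos t₀ ht₀).le)
    have : 0 ≤ 2 / a := by have := N.a_pos; positivity
    nlinarith [ht.1, ht₀.2]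
  · have hb : - (2 / a) * circ (tot h V p q) s
        ≤ circ (fun t θ => - ((fric p q t θ + fric q p t θ) / (2 * t) / h t θ)) s := by
      rw [← circ_mul]
      refine circ_mono ((Sm.const _).mul N.sm_tot) N.sm_decay hs fun θ => ?_
      have hs0 : 0 < s := N.a_pos.trans hs.1
      have ha := N.a_pos
      have hh := N.hpos s hs θ
      have e1 := (abs_le.1 (abs_fric_le p q s θ)).2
      have e2 := (abs_le.1 (abs_fric_le q p s θ)).2
      have e3 : (fric p q s θ + fric q p s θ) / (2 * s)
          ≤ 2 / a * (1 / 2 * (nrm p s θ + nrm q s θ)) := by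
        have np := nrm_nonneg p s θ
        have nq := nrm_nonneg q s θ
        calc (fric p q s θ + fric q p s θ) / (2 * s)
            ≤ (2 * (nrm p s θ + nrm q s θ)) / (2 * s) := by gcongr; linarith
          _ = (nrm p s θ + nrm q s θ) / s := by field_simp
          _ ≤ (nrm p s θ + nrm q s θ) / a := by gcongr; exact hs.1.le
          _ = _ := by field_simp
      have e4 : (fric p q s θ + fric q p s θ) / (2 * s) / h s θ ≤ 2 / a * kin h p q s θ := by
        unfold kin
        rw [← mul_div_assoc]
        gcongr
      have e5 : 0 ≤ 2 / a * (V s θ / h s θ) := mul_nonneg (by positivity) (N.pot_pos hs θ).le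
      unfold tot
      linarith
    have := mul_le_mul_of_nonneg_right hb (exp_pos (2 / a * s)).le
    simp only [mul_one, id]
    linarith

/-- Towards the past the ratio of the values of `V` at two points of a circle is bounded. -/
lemma V_ratio (N : NullSys a b lam h V p q) {t₀ : ℝ} (ht₀ : t₀ ∈ Ioo a b) :
    ∃ K, 0 < K ∧ ∀ t ∈ Ioo a b, t ≤ t₀ → ∀ x y, V t x ≤ K * V t y := by
  set M := (2 * b + 1) * (circ (tot h V p q) t₀ * exp (2 / a * (b - a)))
    + 2 * circ (fun t θ => 1 / h t θ) t₀ with hM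
  refine ⟨exp M, exp_pos _, fun t ht hle x y => ?_⟩
  have hb : 0 < b := N.a_pos.trans (ht.1.trans ht.2)
  have hlog : Sm a b (fun t θ => Real.log (V t θ)) := N.smV.log fun t ht θ => (N.Vpos t ht θ).ne'
  have hg : Sm a b (fun t θ => (2 * b + 1) * kin h p q t θ + 2 * (1 / h t θ)) :=
    ((Sm.const _).mul N.sm_kin).add ((Sm.const 2).mul N.sm_len)
  have hosc := hlog.osc_le hg ht (fun θ => ?_) x y
  · have e1 : circ (fun t θ => (2 * b + 1) * kin h p q t θ + 2 * (1 / h t θ)) t ≤ M := by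
      rw [circ_add ((Sm.const _).mul N.sm_kin) ((Sm.const 2).mul N.sm_len) ht, circ_mul, circ_mul,
        hM]
      have k1 : circ (kin h p q) t ≤ circ (tot h V p q) t :=
        circ_mono N.sm_kin N.sm_tot ht fun θ => by
          unfold tot; linarith [N.pot_pos ht θ]
      have k2 := k1.trans (N.tot_bdd ht ht₀ hle)
      have k3 : circ (fun t θ => 1 / h t θ) t ≤ circ (fun t θ => 1 / h t θ) t₀ := by
        have := le_of_deriv_nonpos (F := fun s => - circ (fun t θ => 1 / h t θ) s) ht₀
          (fun s hs => (N.sm_len.hasDerivAt_integral hs).neg) (fun s hs _ => by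
            have hp : ∀ θ, 0 < pt (fun t θ => 1 / h t θ) s θ := fun θ => by
              rw [N.pt_len s hs]
              have := N.pot_pos hs θ
              have : 0 < s := N.a_pos.trans hs.1
              positivity
            have := circ_pos N.sm_len.pt hs hp
            unfold circ at this
            linarith) ht hle
        linarith
      have : 0 ≤ 2 * b + 1 := by positivity
      have := mul_le_mul_of_nonneg_left k2 this
      linarith
    have e2 : Real.log (V t x) - Real.log (V t y) ≤ M := hosc.trans e1
    have hx := N.Vpos t ht x
    have hy := N.Vpos t ht y
    calc V t x = exp (Real.log (V t x)) := (exp_log hx).symm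
      _ ≤ exp (M + Real.log (V t y)) := exp_le_exp.2 (by linarith)
      _ = exp M * V t y := by rw [exp_add, exp_log hy]
  · have hV := N.Vpos t ht θ
    have hh := N.hpos t ht θ
    have h1 : pth (fun t θ => Real.log (V t θ)) t θ = _ :=
      HasDerivAt.deriv ((N.smV.dth ht θ).log hV.ne')
    have ht0 : 0 < t := N.a_pos.trans ht.1
    have h2 : pth (fun t θ => Real.log (V t θ)) t θ = (t * (nrm p t θ - nrm q t θ)
        + 2 * lam * (p 2 t θ - q 2 t θ) - (p 0 t θ - q 0 t θ)) / h t θ := by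
      rw [h1, N.pth_V ht]; field_simp
    rw [h2, abs_div, abs_of_pos hh]
    have h3 : (2 * b + 1) * kin h p q t θ + 2 * (1 / h t θ)
        = ((b + 1 / 2) * (nrm p t θ + nrm q t θ) + 2) / h t θ := by
      unfold kin; field_simp
    rw [h3]
    gcongr
    have np := nrm_nonneg p t θ
    have nq := nrm_nonneg q t θ
    have a1 : |t * (nrm p t θ - nrm q t θ)| ≤ b * (nrm p t θ + nrm q t θ) := by
      rw [abs_mul, abs_of_pos ht0]
      have : |nrm p t θ - nrm q t θ| ≤ nrm p t θ + nrm q t θ := by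
        rw [abs_le]; constructor <;> linarith
      exact mul_le_mul ht.2.le this (abs_nonneg _) hb.le
    have a2 := abs_lin_le (x := p 0 t θ - q 0 t θ) (y := p 2 t θ - q 2 t θ) N.lam_le
    have a3 := abs_sub (p 0 t θ) (q 0 t θ)
    have a4 := abs_sub (p 2 t θ) (q 2 t θ)
    have b1 := two_mul_abs_le (x := p 0 t θ) one_pos
    have b2 := two_mul_abs_le (x := p 2 t θ) one_pos
    have b3 := two_mul_abs_le (x := q 0 t θ) one_pos
    have b4 := two_mul_abs_le (x := q 2 t θ) one_pos
    have c1 : p 0 t θ ^ 2 + p 2 t θ ^ 2 + q 0 t θ ^ 2 + q 2 t θ ^ 2 ≤ nrm p t θ + nrm q t θ := by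
      unfold nrm; nlinarith [sq_nonneg (p 1 t θ), sq_nonneg (p 3 t θ), sq_nonneg (q 1 t θ),
        sq_nonneg (q 3 t θ)]
    have hsplit : t * (nrm p t θ - nrm q t θ) + 2 * lam * (p 2 t θ - q 2 t θ)
        - (p 0 t θ - q 0 t θ) = t * (nrm p t θ - nrm q t θ)
          - (p 0 t θ - q 0 t θ - 2 * lam * (p 2 t θ - q 2 t θ)) := by ring
    rw [hsplit]
    have a5 := abs_sub (t * (nrm p t θ - nrm q t θ))
      (p 0 t θ - q 0 t θ - 2 * lam * (p 2 t θ - q 2 t θ))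
    linarith

end NullSys

namespace NullSys

variable {a b lam : ℝ} {h V : ℝ → ℝ → ℝ} {p q : Fin 4 → ℝ → ℝ → ℝ}

lemma hasDerivAt_len (N : NullSys a b lam h V p q) {t : ℝ} (ht : t ∈ Ioo a b) :
    HasDerivAt (circ (fun t θ => 1 / h t θ)) (2 * t * circ (fun t θ => V t θ / h t θ) t) t := by
  have h1 := N.sm_len.hasDerivAt_integral ht
  have h2 : (fun θ => pt (fun t θ => 1 / h t θ) t θ) = fun θ => 2 * t * (V t θ / h t θ) :=
    funext (N.pt_len t ht)
  rw [h2, intervalIntegral.integral_const_mul] at h1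
  exact h1

/-- The length `P(t) = ∫ α^{-1/2}` does not shrink to zero towards the past. The timelike
convergence condition keeps the kinetic energy `Ẽ` away from zero, and then
`Ẽ + κ log P - P / a²` is nonincreasing for small `κ`. -/
lemma len_lower (N : NullSys a b lam h V p q) {t₀ : ℝ} (ht₀ : t₀ ∈ Ioo a b) :
    ∃ c, 0 < c ∧ ∀ t ∈ Ioo a b, t ≤ t₀ → c ≤ circ (fun t θ => 1 / h t θ) t := by
  obtain ⟨K, hK, hV⟩ := N.V_ratio ht₀
  set P := circ (fun t θ => 1 / h t θ) with hP
  set X := circ (fun t θ => V t θ / h t θ) with hX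
  set E := circ (tot h V p q) with hE
  set T := circ (kin h p q) with hT
  have ha := N.a_pos
  have hPpos : ∀ t ∈ Ioo a b, 0 < P t := fun t ht =>
    circ_pos N.sm_len ht fun θ => one_div_pos.2 (N.hpos t ht θ)
  have hXpos : ∀ t ∈ Ioo a b, 0 < X t := fun t ht => circ_pos N.sm_pot ht fun θ => N.pot_pos ht θ
  have hEpos : 0 < E t₀ := circ_pos N.sm_tot ht₀ fun θ =>
    add_pos_of_nonneg_of_pos (N.kin_nonneg ht₀ θ) (N.pot_pos ht₀ θ)
  have hET : ∀ t ∈ Ioo a b, E t ≤ 3 * T t := by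
    intro t ht
    rw [hT, ← circ_mul]
    refine circ_mono N.sm_tot ((Sm.const 3).mul N.sm_kin) ht fun θ => ?_
    have h1 := N.tcc t ht θ
    have hh := N.hpos t ht θ
    have h2 : V t θ / h t θ ≤ 2 * kin h p q t θ := by
      unfold kin
      rw [← mul_div_assoc]
      gcongr; linarith
    unfold tot; linarith
  have hTE : ∀ t ∈ Ioo a b, T t ≤ E t := fun t ht =>
    circ_mono N.sm_kin N.sm_tot ht fun θ => by unfold tot; linarith [N.pot_pos ht θ]
  set c := E t₀ / 3 with hc
  have hcpos : 0 < c := by positivity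
  have hTc : ∀ t ∈ Ioo a b, t ≤ t₀ → c ≤ T t := fun t ht hle => by
    have h1 := N.tot_anti ht ht₀ hle
    have h2 := hET t ht
    rw [hc]; linarith
  -- lower bound of `V` by its mean
  have hVlow : ∀ t ∈ Ioo a b, t ≤ t₀ → ∀ θ, X t / (K * P t) ≤ V t θ := by
    intro t ht hle θ
    have h1 : X t ≤ K * V t θ * P t := by
      rw [hP, ← circ_mul]
      refine circ_mono N.sm_pot ((Sm.const _).mul N.sm_len) ht fun x => ?_
      have hh := N.hpos t ht x
      rw [mul_one_div]
      have := hV t ht hle x θ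
      gcongr
    rw [div_le_iff₀ (mul_pos hK (hPpos t ht))]
    linarith
  have hTd : ∀ t ∈ Ioo a b, HasDerivAt T (circ (kinSource lam h V p q) t) t := fun t ht =>
    hasDerivAt_balance N.sm_kin N.sm_flux N.sm_kinSource N.pt_kin ht
  have hTd' : ∀ t ∈ Ioo a b, t ≤ t₀ →
      circ (kinSource lam h V p q) t ≤ - (t * (X t / (K * P t))) * T t + 2 / t * X t := by
    intro t ht hle
    have ht0 : 0 < t := ha.trans ht.1
    have hrw : - (t * (X t / (K * P t))) * T t + 2 / t * X t
        = circ (fun s θ => - (t * (X t / (K * P t))) * kin h p q s θ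
          + 2 / t * (V s θ / h s θ)) t := by
      rw [circ_add ((Sm.const _).mul N.sm_kin) ((Sm.const _).mul N.sm_pot) ht, circ_mul, circ_mul]
    rw [hrw]
    refine circ_mono N.sm_kinSource (((Sm.const _).mul N.sm_kin).add ((Sm.const _).mul N.sm_pot))
      ht fun θ => ?_
    have hh := N.hpos t ht θ
    have hVp := N.Vpos t ht θ
    have np := nrm_nonneg p t θ
    have nq := nrm_nonneg q t θ
    have hfr : 0 ≤ (fric p q t θ + fric q p t θ) / (2 * t) :=
      div_nonneg (fric_add_nonneg p q t θ) (by positivity)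
    have hlow := hVlow t ht hle θ
    have a2 := (le_abs_self _).trans
      (abs_lin_le (x := p 0 t θ + q 0 t θ) (y := p 2 t θ + q 2 t θ) N.lam_le)
    have a3 := abs_add_le (p 0 t θ) (q 0 t θ)
    have a4 := abs_add_le (p 2 t θ) (q 2 t θ)
    have b1 := two_mul_abs_le (x := p 0 t θ) ht0
    have b2 := two_mul_abs_le (x := p 2 t θ) ht0
    have b3 := two_mul_abs_le (x := q 0 t θ) ht0
    have b4 := two_mul_abs_le (x := q 2 t θ) ht0
    have c1 : p 0 t θ ^ 2 + p 2 t θ ^ 2 + q 0 t θ ^ 2 + q 2 t θ ^ 2 ≤ nrm p t θ + nrm q t θ := by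
      unfold nrm; nlinarith [sq_nonneg (p 1 t θ), sq_nonneg (p 3 t θ), sq_nonneg (q 1 t θ),
        sq_nonneg (q 3 t θ)]
    have c2 : t / 2 * (p 0 t θ ^ 2 + p 2 t θ ^ 2 + q 0 t θ ^ 2 + q 2 t θ ^ 2)
        ≤ t / 2 * (nrm p t θ + nrm q t θ) := by gcongr
    have c3 : 2 / t = 4 * (1 / (2 * t)) := by field_simp; norm_num
    have d1 : p 0 t θ + q 0 t θ - 2 * lam * (p 2 t θ + q 2 t θ) - t * (nrm p t θ + nrm q t θ)
        ≤ - (t / 2 * (nrm p t θ + nrm q t θ)) + 2 / t := by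
      rw [c3]; linarith
    have d2 := mul_le_mul_of_nonneg_left d1 hVp.le
    have d3 : X t / (K * P t) * (t / 2 * (nrm p t θ + nrm q t θ))
        ≤ V t θ * (t / 2 * (nrm p t θ + nrm q t θ)) :=
      mul_le_mul_of_nonneg_right hlow (by positivity)
    have e1 : -(t * (X t / (K * P t))) * kin h p q t θ + 2 / t * (V t θ / h t θ)
        = (- (X t / (K * P t) * (t / 2 * (nrm p t θ + nrm q t θ))) + V t θ * (2 / t)) / h t θ := by
      unfold kin
      ring
    rw [e1]
    unfold kinSource
    gcongr
    linarith
  set κ := c / (2 * K) with hκ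
  have hκpos : 0 < κ := by positivity
  have hF : ∀ t ∈ Ioo a b, HasDerivAt (fun t => T t + κ * Real.log (P t) - 1 / a ^ 2 * P t) _ t :=
    fun t ht => ((hTd t ht).add (((N.hasDerivAt_len ht).log (hPpos t ht).ne').const_mul κ)).sub
      ((N.hasDerivAt_len ht).const_mul (1 / a ^ 2))
  have hmono : ∀ t ∈ Ioo a b, t ≤ t₀ → T t₀ + κ * Real.log (P t₀) - 1 / a ^ 2 * P t₀
      ≤ T t + κ * Real.log (P t) - 1 / a ^ 2 * P t := by
    intro t ht hle
    refine le_of_deriv_nonpos ht₀ hF (fun s hs hsle => ?_) ht hle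
    have hs0 : 0 < s := ha.trans hs.1
    have h1 := hTd' s hs hsle
    have h2 := hTc s hs hsle
    have hXs := hXpos s hs
    have hPs := hPpos s hs
    have h3 : s * (X s / (K * P s)) * c ≤ s * (X s / (K * P s)) * T s := by gcongr
    have h4 : κ * (2 * s * X s / P s) = s * (X s / (K * P s)) * c := by
      rw [hκ]; field_simp
    have h5 : 2 / s * X s ≤ 1 / a ^ 2 * (2 * s * X s) := by
      have : 2 / s ≤ 1 / a ^ 2 * (2 * s) := by
        rw [div_le_iff₀ hs0, one_div, ← div_eq_inv_mul, div_mul_eq_mul_div, le_div_iff₀ (by positivity)]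
        nlinarith [hs.1]
      calc 2 / s * X s ≤ 1 / a ^ 2 * (2 * s) * X s := by gcongr
        _ = _ := by ring
    rw [← hX, ← hP, h4]
    linarith
  refine ⟨exp ((T t₀ + κ * Real.log (P t₀) - 1 / a ^ 2 * P t₀
    - E t₀ * exp (2 / a * (b - a))) / κ), exp_pos _, fun t ht hle => ?_⟩
  rw [← Real.le_log_iff_exp_le (hPpos t ht), div_le_iff₀ hκpos]
  have h1 := hmono t ht hle
  have h2 := N.tot_bdd ht ht₀ hle
  have h3 := hTE t ht
  have h4 : 0 < 1 / a ^ 2 * P t := by have := hPpos t ht; positivity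
  linarith

/-! ### Pointwise bounds on the null derivatives -/

lemma nrm_bdd_past (N : NullSys a b lam h V p q) {t₀ : ℝ} (ht₀ : t₀ ∈ Ioo a b) :
    ∃ C, ∀ t ∈ Ioo a b, t ≤ t₀ → ∀ θ, nrm p t θ ≤ C ∧ nrm q t θ ≤ C := by
  obtain ⟨K, hK, hV⟩ := N.V_ratio ht₀
  obtain ⟨c, hc, hcP⟩ := N.len_lower ht₀
  have ha := N.a_pos
  have hb : 0 < b := ha.trans (ht₀.1.trans ht₀.2)
  set P := circ (fun t θ => 1 / h t θ) with hP
  set X := circ (fun t θ => V t θ / h t θ) with hX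
  have hPpos : ∀ t ∈ Ioo a b, 0 < P t := fun t ht =>
    circ_pos N.sm_len ht fun θ => one_div_pos.2 (N.hpos t ht θ)
  have hXpos : ∀ t ∈ Ioo a b, 0 < X t := fun t ht => circ_pos N.sm_pot ht fun θ => N.pot_pos ht θ
  -- `V` is controlled by the logarithmic derivative of `P`
  have hVup : ∀ t ∈ Ioo a b, t ≤ t₀ → ∀ θ, V t θ ≤ K / (2 * a) * (2 * t * X t / P t) := by
    intro t ht hle θ
    have h1 : V t θ * P t ≤ K * X t := by
      rw [hP, hX, ← circ_mul, ← circ_mul]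
      refine circ_mono ((Sm.const _).mul N.sm_len) ((Sm.const _).mul N.sm_pot) ht fun x => ?_
      have hh := N.hpos t ht x
      rw [mul_one_div, ← mul_div_assoc]
      have := hV t ht hle θ x
      gcongr
    have hPt := hPpos t ht
    have hXt := hXpos t ht
    have h2 : K / (2 * a) * (2 * t * X t / P t) = (t / a) * (K * X t) / P t := by field_simp
    rw [h2, le_div_iff₀ hPt]
    have h3 : 1 ≤ t / a := (one_le_div ha).2 ht.1.le
    have h4 : 0 < K * X t := by positivity
    nlinarith
  obtain ⟨D1, hD1, hp0⟩ := (sm_nrm N.half1.smp).bdd_slice ht₀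
  obtain ⟨D2, hD2, hq0⟩ := (sm_nrm N.half2.smp).bdd_slice ht₀
  set k := (4 * b + 3) * (K / (2 * a)) with hk
  have hkpos : 0 < k := by positivity
  set L := 2 / a + 1 with hL
  have hLpos : 0 < L := by positivity
  -- the barrier `exp (m - k log P - L t)`
  have hΦ : ∀ m : ℝ, ∀ t ∈ Ioo a b, HasDerivAt (fun t => exp (m - k * Real.log (P t) - L * t))
      (exp (m - k * Real.log (P t) - L * t) * (- (k * (2 * t * X t / P t)) - L)) t := by
    intro m t ht
    have := ((((N.hasDerivAt_len ht).log (hPpos t ht).ne').const_mul k).const_sub m).sub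
      ((hasDerivAt_id t).const_mul L)
    have h2 := this.exp
    simp only [mul_one] at h2
    exact h2
  obtain ⟨m, hm⟩ : ∃ m, m = Real.log (D1 + D2 + 1) + k * (|Real.log c| + |Real.log (P t₀)|)
      + L * b := ⟨_, rfl⟩
  have hPmono : ∀ t ∈ Ioo a b, t ≤ t₀ → P t ≤ P t₀ := by
    intro t ht hle
    have := le_of_deriv_nonpos (F := fun s => - P s) ht₀ (fun s hs => (N.hasDerivAt_len hs).neg)
      (fun s hs _ => by
        have := hXpos s hs
        have : 0 < s := ha.trans hs.1
        rw [neg_nonpos]; positivity) ht hle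
    linarith
  have hlow : ∀ t ∈ Ioo a b, t ≤ t₀ → D1 + D2 + 1 ≤ exp (m - k * Real.log (P t) - L * t) := by
    intro t ht hle
    rw [← Real.log_le_iff_le_exp (by positivity), hm]
    have h1 : Real.log (P t) ≤ |Real.log (P t₀)| :=
      (Real.log_le_log (hPpos t ht) (hPmono t ht hle)).trans (le_abs_self _)
    have h2 : k * Real.log (P t) ≤ k * (|Real.log c| + |Real.log (P t₀)|) := by
      gcongr; linarith [abs_nonneg (Real.log c)]
    have h3 : L * t ≤ L * b := by gcongr; exact ht.2.le
    linarith
  have step : ∀ {h' : ℝ → ℝ → ℝ} {p' q' : Fin 4 → ℝ → ℝ → ℝ}, HalfSys a b lam h' V p' q' →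
      ∀ t ∈ Ioo a b, t < t₀ → ∀ θ,
      nrm p' t θ = exp (m - k * Real.log (P t) - L * t) →
      nrm q' t θ ≤ exp (m - k * Real.log (P t) - L * t) → pth (nrm p') t θ = 0 →
      exp (m - k * Real.log (P t) - L * t) * (- (k * (2 * t * X t / P t)) - L)
        < pt (nrm p') t θ := by
    intro h' p' q' H t ht hlt θ h1 h2 h3
    have hΦ1 : 1 ≤ exp (m - k * Real.log (P t) - L * t) := by
      linarith [hlow t ht hlt.le]
    have h4 := H.le_pt_nrm ha N.lam_le ht θ _ (N.Vpos t ht θ) h1 h2 h3 hΦ1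
    refine lt_of_lt_of_le ?_ h4
    rw [mul_comm]
    have h5 := hVup t ht hlt.le θ
    have h6 : (4 * b + 3) * V t θ ≤ k * (2 * t * X t / P t) := by
      rw [hk, mul_assoc]; gcongr
    apply mul_lt_mul_of_pos_right _ (by linarith)
    rw [hL]; linarith
  have main := barrier_past ht₀ (sm_nrm N.half1.smp) (sm_nrm N.half2.smp) (hΦ m)
    (fun θ => by
      have := (le_abs_self _).trans (hp0 θ)
      have := hlow t₀ ht₀ le_rfl
      linarith)
    (fun θ => by
      have := (le_abs_self _).trans (hq0 θ)
      have := hlow t₀ ht₀ le_rfl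
      linarith)
    (step N.half1) (step N.half2)
  refine ⟨exp (m - k * Real.log c), fun t ht hle θ => ?_⟩
  have h1 := main t ht hle θ
  have h2 : exp (m - k * Real.log (P t) - L * t) ≤ exp (m - k * Real.log c) := by
    apply exp_le_exp.2
    have h3 : k * Real.log c ≤ k * Real.log (P t) := by
      gcongr; exact hcP t ht hle
    have h4 : 0 < L * t := mul_pos hLpos (ha.trans ht.1)
    linarith
  exact ⟨h1.1.le.trans h2, h1.2.le.trans h2⟩

lemma nrm_bdd_future (N : NullSys a b lam h V p q) {t₀ : ℝ} (ht₀ : t₀ ∈ Ioo a b) :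
    ∃ C, ∀ t ∈ Ioo a b, t₀ ≤ t → ∀ θ, nrm p t θ ≤ C ∧ nrm q t θ ≤ C := by
  have ha := N.a_pos
  obtain ⟨D1, hD1, hp0⟩ := (sm_nrm N.half1.smp).bdd_slice ht₀
  obtain ⟨D2, hD2, hq0⟩ := (sm_nrm N.half2.smp).bdd_slice ht₀
  set M := D1 + D2 + 1 + 1 / a ^ 2 with hM
  have hMpos : 0 < M := by positivity
  set L := 2 / a + 1 with hL
  have hLpos : 0 < L := by positivity
  have hΦ : ∀ t ∈ Ioo a b, HasDerivAt (fun t => M * exp (L * (t - t₀)))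
      (L * (M * exp (L * (t - t₀)))) t := by
    intro t ht
    have := ((((hasDerivAt_id t).sub_const t₀).const_mul L).exp).const_mul M
    refine this.congr_deriv ?_
    simp only [id]; ring
  have hlow : ∀ t, t₀ ≤ t → M ≤ M * exp (L * (t - t₀)) := fun t hle =>
    le_mul_of_one_le_right hMpos.le (one_le_exp (mul_nonneg hLpos.le (sub_nonneg.2 hle)))
  have hM2 : 1 / a ^ 2 ≤ M := by rw [hM]; linarith
  have step : ∀ {h' : ℝ → ℝ → ℝ} {p' q' : Fin 4 → ℝ → ℝ → ℝ}, HalfSys a b lam h' V p' q' →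
      ∀ t ∈ Ioo a b, t₀ < t → ∀ θ, nrm p' t θ = M * exp (L * (t - t₀)) →
      nrm q' t θ ≤ M * exp (L * (t - t₀)) → pth (nrm p') t θ = 0 →
      pt (nrm p') t θ < L * (M * exp (L * (t - t₀))) := by
    intro h' p' q' H t ht hlt θ h1 h2 h3
    have h4 := H.pt_nrm_le ha N.lam_le ht θ _ (N.Vpos t ht θ) h1 h2 h3
      (hM2.trans (hlow t hlt.le))
    refine h4.trans_lt ?_
    apply mul_lt_mul_of_pos_right _ (by positivity)
    rw [hL]; linarith
  have hp2 : 0 < 1 / a ^ 2 := by positivity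
  have main := barrier_future ht₀ (sm_nrm N.half1.smp) (sm_nrm N.half2.smp) hΦ
    (fun θ => by
      have := (le_abs_self _).trans (hp0 θ)
      have := hlow t₀ le_rfl
      linarith)
    (fun θ => by
      have := (le_abs_self _).trans (hq0 θ)
      have := hlow t₀ le_rfl
      linarith)
    (step N.half1) (step N.half2)
  refine ⟨M * exp (L * (b - t₀)), fun t ht hle θ => ?_⟩
  have h1 := main t ht hle θ
  have h2 : M * exp (L * (t - t₀)) ≤ M * exp (L * (b - t₀)) := by
    have := ht.2.le
    gcongr
  exact ⟨h1.1.le.trans h2, h1.2.le.trans h2⟩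

end NullSys

/-! ### Classes of bounded functions on the strip -/

/-- Uniform boundedness on the strip `(a, b) × ℝ`. -/
def Bd (a b : ℝ) (f : ℝ → ℝ → ℝ) : Prop := ∃ C, ∀ t ∈ Ioo a b, ∀ θ, |f t θ| ≤ C

namespace Bd

variable {a b : ℝ} {f g : ℝ → ℝ → ℝ}

lemma congr (hf : Bd a b f) (h : ∀ t ∈ Ioo a b, ∀ θ, g t θ = f t θ) : Bd a b g := by
  obtain ⟨C, hC⟩ := hf
  exact ⟨C, fun t ht θ => by rw [h t ht]; exact hC t ht θ⟩

lemma nonneg (hf : Bd a b f) : ∃ C, 0 ≤ C ∧ ∀ t ∈ Ioo a b, ∀ θ, |f t θ| ≤ C := by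
  obtain ⟨C, hC⟩ := hf
  exact ⟨max C 0, le_max_right _ _, fun t ht θ => (hC t ht θ).trans (le_max_left _ _)⟩

lemma add (hf : Bd a b f) (hg : Bd a b g) : Bd a b (fun t θ => f t θ + g t θ) := by
  obtain ⟨C, hC⟩ := hf
  obtain ⟨D, hD⟩ := hg
  exact ⟨C + D, fun t ht θ => (abs_add_le _ _).trans (add_le_add (hC t ht θ) (hD t ht θ))⟩

lemma neg (hf : Bd a b f) : Bd a b (fun t θ => - f t θ) := by
  obtain ⟨C, hC⟩ := hf
  exact ⟨C, fun t ht θ => by rw [abs_neg]; exact hC t ht θ⟩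

lemma sub (hf : Bd a b f) (hg : Bd a b g) : Bd a b (fun t θ => f t θ - g t θ) :=
  (hf.add hg.neg).congr fun _ _ _ => sub_eq_add_neg _ _

lemma mul (hf : Bd a b f) (hg : Bd a b g) : Bd a b (fun t θ => f t θ * g t θ) := by
  obtain ⟨C, hC0, hC⟩ := hf.nonneg
  obtain ⟨D, hD0, hD⟩ := hg.nonneg
  refine ⟨C * D, fun t ht θ => ?_⟩
  rw [abs_mul]
  exact mul_le_mul (hC t ht θ) (hD t ht θ) (abs_nonneg _) hC0

lemma const (c : ℝ) : Bd a b (fun _ _ => c) := ⟨|c|, fun _ _ _ => le_rfl⟩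

lemma time (ha : 0 < a) : Bd a b (fun t _ => t) :=
  ⟨b, fun t ht _ => by rw [abs_of_pos (ha.trans ht.1)]; exact ht.2.le⟩

lemma timeInv (ha : 0 < a) : Bd a b (fun t _ => t⁻¹) :=
  ⟨a⁻¹, fun t ht _ => by
    rw [abs_of_pos (inv_pos.2 (ha.trans ht.1))]
    exact inv_anti₀ ha ht.1.le⟩

lemma exp (hf : Bd a b f) : Bd a b (fun t θ => Real.exp (f t θ)) := by
  obtain ⟨C, hC⟩ := hf
  exact ⟨Real.exp C, fun t ht θ => by
    rw [abs_of_pos (Real.exp_pos _)]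
    exact Real.exp_le_exp.2 ((le_abs_self _).trans (hC t ht θ))⟩

/-- The square bounds used for the null derivatives control the individual components. -/
lemma of_sq (hf : ∃ C, ∀ t ∈ Ioo a b, ∀ θ, f t θ ^ 2 ≤ C) : Bd a b f := by
  obtain ⟨C, hC⟩ := hf
  exact ⟨C + 1, fun t ht θ => by
    have h1 := hC t ht θ
    rw [← sq_abs] at h1
    nlinarith [sq_nonneg (|f t θ| - 1 / 2)]⟩

end Bd

/-- Smooth functions that are bounded on the strip together with their first derivatives. -/
structure Bd1 (a b : ℝ) (f : ℝ → ℝ → ℝ) : Prop where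
  sm : Sm a b f
  b0 : Bd a b f
  bt : Bd a b (pt f)
  bθ : Bd a b (pth f)

lemma pt_congr {a b : ℝ} {f g : ℝ → ℝ → ℝ} (h : ∀ t ∈ Ioo a b, ∀ θ, g t θ = f t θ) :
    ∀ t ∈ Ioo a b, ∀ θ, pt g t θ = pt f t θ := fun t ht θ => by
  apply Filter.EventuallyEq.deriv_eq
  filter_upwards [isOpen_Ioo.mem_nhds ht] with s hs using h s hs θ

lemma pth_congr {a b : ℝ} {f g : ℝ → ℝ → ℝ} (h : ∀ t ∈ Ioo a b, ∀ θ, g t θ = f t θ) :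
    ∀ t ∈ Ioo a b, ∀ θ, pth g t θ = pth f t θ := fun t ht θ => by
  have : (fun x => g t x) = fun x => f t x := funext (h t ht)
  simp only [pth, this]

namespace Bd1

variable {a b : ℝ} {f g : ℝ → ℝ → ℝ}

lemma congr (hf : Bd1 a b f) (h : ∀ t ∈ Ioo a b, ∀ θ, g t θ = f t θ) : Bd1 a b g :=
  ⟨hf.sm.congr h, hf.b0.congr h, hf.bt.congr (pt_congr h), hf.bθ.congr (pth_congr h)⟩

lemma const (c : ℝ) : Bd1 a b (fun _ _ => c) :=
  ⟨Sm.const c, Bd.const c, (Bd.const 0).congr fun t _ _ => (hasDerivAt_const t c).deriv,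
    (Bd.const 0).congr fun _ _ θ => (hasDerivAt_const θ c).deriv⟩

lemma time (ha : 0 < a) : Bd1 a b (fun t _ => t) :=
  ⟨Sm.time, Bd.time ha, (Bd.const 1).congr fun t _ _ => (hasDerivAt_id t).deriv,
    (Bd.const 0).congr fun t _ θ => (hasDerivAt_const θ t).deriv⟩

lemma add (hf : Bd1 a b f) (hg : Bd1 a b g) : Bd1 a b (fun t θ => f t θ + g t θ) :=
  ⟨hf.sm.add hg.sm, hf.b0.add hg.b0,
    (hf.bt.add hg.bt).congr fun _ ht θ => ((hf.sm.dt ht θ).add (hg.sm.dt ht θ)).deriv,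
    (hf.bθ.add hg.bθ).congr fun _ ht θ => ((hf.sm.dth ht θ).add (hg.sm.dth ht θ)).deriv⟩

lemma mul (hf : Bd1 a b f) (hg : Bd1 a b g) : Bd1 a b (fun t θ => f t θ * g t θ) :=
  ⟨hf.sm.mul hg.sm, hf.b0.mul hg.b0,
    ((hf.bt.mul hg.b0).add (hf.b0.mul hg.bt)).congr
      fun _ ht θ => ((hf.sm.dt ht θ).mul (hg.sm.dt ht θ)).deriv,
    ((hf.bθ.mul hg.b0).add (hf.b0.mul hg.bθ)).congr
      fun _ ht θ => ((hf.sm.dth ht θ).mul (hg.sm.dth ht θ)).deriv⟩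

lemma neg (hf : Bd1 a b f) : Bd1 a b (fun t θ => - f t θ) :=
  ((const (-1)).mul hf).congr fun _ _ _ => by ring

lemma sub (hf : Bd1 a b f) (hg : Bd1 a b g) : Bd1 a b (fun t θ => f t θ - g t θ) :=
  (hf.add hg.neg).congr fun _ _ _ => sub_eq_add_neg _ _

lemma exp (hf : Bd1 a b f) : Bd1 a b (fun t θ => Real.exp (f t θ)) :=
  ⟨hf.sm.exp, hf.b0.exp,
    (hf.b0.exp.mul hf.bt).congr fun _ ht θ => (hf.sm.dt ht θ).exp.deriv,
    (hf.b0.exp.mul hf.bθ).congr fun _ ht θ => (hf.sm.dth ht θ).exp.deriv⟩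

/-- A smooth function with bounded time derivative and bounded angular derivative lies in `Bd1`;
the time derivative alone bounds the function itself. -/
lemma of_deriv (hf : Sm a b f) {t₀ : ℝ} (ht₀ : t₀ ∈ Ioo a b) (h1 : Bd a b (pt f))
    (h2 : Bd a b (pth f)) : Bd1 a b f := by
  obtain ⟨C, hC⟩ := h1
  exact ⟨hf, hf.bdd_of_pt_bdd ht₀ hC, ⟨C, hC⟩, h2⟩

end Bd1

/-- Bounded smooth functions whose angular derivative is controlled by `√W`. -/
structure Gr (a b : ℝ) (W f : ℝ → ℝ → ℝ) : Prop where
  sm : Sm a b f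
  b0 : Bd a b f
  bθ : ∃ K, 0 ≤ K ∧ ∀ t ∈ Ioo a b, ∀ θ, pth f t θ ^ 2 ≤ K * W t θ

namespace Gr

variable {a b : ℝ} {W f g : ℝ → ℝ → ℝ}

lemma congr (hf : Gr a b W f) (h : ∀ t ∈ Ioo a b, ∀ θ, g t θ = f t θ) : Gr a b W g := by
  obtain ⟨K, hK0, hK⟩ := hf.bθ
  exact ⟨hf.sm.congr h, hf.b0.congr h, K, hK0, fun t ht θ => by
    rw [pth_congr h t ht]; exact hK t ht θ⟩

lemma const (c : ℝ) : Gr a b W (fun _ _ => c) :=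
  ⟨Sm.const c, Bd.const c, 0, le_rfl, fun t _ θ => by
    simp [pth]⟩

lemma time (ha : 0 < a) : Gr a b W (fun t _ => t) :=
  ⟨Sm.time, Bd.time ha, 0, le_rfl, fun t _ θ => by simp [pth]⟩

lemma timeInv (ha : 0 < a) : Gr a b W (fun t _ => t⁻¹) :=
  ⟨Sm.time.inv fun _ ht _ => (ha.trans ht.1).ne', Bd.timeInv ha, 0, le_rfl,
    fun t _ θ => by simp [pth]⟩

lemma add (hf : Gr a b W f) (hg : Gr a b W g) : Gr a b W (fun t θ => f t θ + g t θ) := by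
  obtain ⟨K, hK0, hK⟩ := hf.bθ
  obtain ⟨L, hL0, hL⟩ := hg.bθ
  refine ⟨hf.sm.add hg.sm, hf.b0.add hg.b0, 2 * K + 2 * L, by positivity, fun t ht θ => ?_⟩
  have h1 : pth (fun t θ => f t θ + g t θ) t θ = pth f t θ + pth g t θ :=
    ((hf.sm.dth ht θ).add (hg.sm.dth ht θ)).deriv
  rw [h1]
  nlinarith [hK t ht θ, hL t ht θ, sq_nonneg (pth f t θ - pth g t θ)]

lemma mul (hf : Gr a b W f) (hg : Gr a b W g) : Gr a b W (fun t θ => f t θ * g t θ) := by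
  obtain ⟨K, hK0, hK⟩ := hf.bθ
  obtain ⟨L, hL0, hL⟩ := hg.bθ
  obtain ⟨C, hC0, hC⟩ := hf.b0.nonneg
  obtain ⟨D, hD0, hD⟩ := hg.b0.nonneg
  refine ⟨hf.sm.mul hg.sm, hf.b0.mul hg.b0, 2 * (D ^ 2 * K) + 2 * (C ^ 2 * L), by positivity,
    fun t ht θ => ?_⟩
  have h1 : pth (fun t θ => f t θ * g t θ) t θ = pth f t θ * g t θ + f t θ * pth g t θ :=
    ((hf.sm.dth ht θ).mul (hg.sm.dth ht θ)).deriv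
  rw [h1]
  have h2 : g t θ ^ 2 * pth f t θ ^ 2 ≤ D ^ 2 * (K * W t θ) :=
    mul_le_mul (sq_le_sq' (abs_le.1 (hD t ht θ)).1 (abs_le.1 (hD t ht θ)).2) (hK t ht θ)
      (sq_nonneg _) (sq_nonneg _)
  have h3 : f t θ ^ 2 * pth g t θ ^ 2 ≤ C ^ 2 * (L * W t θ) :=
    mul_le_mul (sq_le_sq' (abs_le.1 (hC t ht θ)).1 (abs_le.1 (hC t ht θ)).2) (hL t ht θ)
      (sq_nonneg _) (sq_nonneg _)
  nlinarith [sq_nonneg (pth f t θ * g t θ - f t θ * pth g t θ)]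

lemma sub (hf : Gr a b W f) (hg : Gr a b W g) : Gr a b W (fun t θ => f t θ - g t θ) :=
  (hf.add ((const (-1)).mul hg)).congr fun _ _ _ => by ring

end Gr

/-! ### Bounds on the first derivatives of the null derivatives -/

/-- The right-hand sides of the transport equations inherit the control of their ingredients. -/
lemma HalfSys.source {a b lam : ℝ} {h V W : ℝ → ℝ → ℝ} {p q : Fin 4 → ℝ → ℝ → ℝ}
    (H : HalfSys a b lam h V p q) (ha : 0 < a) (hV : Gr a b W V) (hp : ∀ i, Gr a b W (p i))
    (hq : ∀ i, Gr a b W (q i)) (i : Fin 4) :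
    Gr a b W (fun t θ => pt (p i) t θ - h t θ * pth (p i) t θ) := by
  have hd : ∀ i, Gr a b W (fun t θ => 2 * t * V t θ * p i t θ) := fun i =>
    (((Gr.const 2).mul (Gr.time ha)).mul hV).mul (hp i)
  have hi : Gr a b W (fun t _ => (1 / 2) * t⁻¹) := (Gr.const (1 / 2)).mul (Gr.timeInv ha)
  fin_cases i
  · refine ((((((hp 0).add (hq 0)).mul ((Gr.const (-1)).mul hi)).sub (hd 0)).add
      (((Gr.const 2).mul (hp 1)).mul (hq 1))).add hV).congr fun t ht θ => ?_
    have := H.e0 t ht θ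
    have ht0 : t ≠ 0 := (ha.trans ht.1).ne'
    simp only [Fin.zero_eta]
    rw [this]; field_simp; ring
  · refine (((((hq 1).sub (hp 1)).mul hi).sub (hd 1)).sub
      (((Gr.const 2).mul (hp 0)).mul (hq 1))).congr fun t ht θ => ?_
    have := H.e1 t ht θ
    have ht0 : t ≠ 0 := (ha.trans ht.1).ne'
    simp only [Fin.mk_one]
    rw [this]; field_simp; ring
  · refine ((((((hp 2).add (hq 2)).mul ((Gr.const (-1)).mul hi)).sub (hd 2)).add
      (((Gr.const (2 * lam)).mul (hp 3)).mul (hq 3))).sub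
        ((Gr.const (2 * lam)).mul hV)).congr fun t ht θ => ?_
    have := H.e2 t ht θ
    have ht0 : t ≠ 0 := (ha.trans ht.1).ne'
    simp only [Fin.reduceFinMk]
    rw [this]; field_simp; ring
  · refine (((((hp 3).add (hq 3)).mul ((Gr.const (-1)).mul hi)).sub (hd 3)).sub
      (((Gr.const (2 * lam)).mul (hp 2)).mul (hq 3))).congr fun t ht θ => ?_
    have := H.e3 t ht θ
    have ht0 : t ≠ 0 := (ha.trans ht.1).ne'
    simp only [Fin.reduceFinMk]
    rw [this]; field_simp; ring

/-- Differentiated transport equations: the squared length of `∂_θ p` satisfies a linear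
differential inequality along the characteristics. -/
lemma HalfSys.pt_nrm_pth {a b lam : ℝ} {h V : ℝ → ℝ → ℝ} {p q : Fin 4 → ℝ → ℝ → ℝ}
    (H : HalfSys a b lam h V p q) (ha : 0 < a) (hh : Sm a b h) (hh' : Bd a b (pth h))
    (hV : Gr a b (fun t θ => 1 + nrm (fun i => pth (p i)) t θ + nrm (fun i => pth (q i)) t θ) V)
    (hp : ∀ i, Gr a b
      (fun t θ => 1 + nrm (fun i => pth (p i)) t θ + nrm (fun i => pth (q i)) t θ) (p i))
    (hq : ∀ i, Gr a b
      (fun t θ => 1 + nrm (fun i => pth (p i)) t θ + nrm (fun i => pth (q i)) t θ) (q i)) :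
    ∃ L, 0 ≤ L ∧ ∀ t ∈ Ioo a b, ∀ θ,
      |pt (nrm fun i => pth (p i)) t θ - h t θ * pth (nrm fun i => pth (p i)) t θ|
        ≤ L * (1 + nrm (fun i => pth (p i)) t θ + nrm (fun i => pth (q i)) t θ) := by
  obtain ⟨C, hC0, hC⟩ := hh'.nonneg
  have hS := H.source ha hV hp hq
  choose K hK0 hK using fun i => (hS i).bθ
  refine ⟨2 * C + 1 + (K 0 + K 1 + K 2 + K 3), by
    have := hK0 0; have := hK0 1; have := hK0 2; have := hK0 3; positivity, fun t ht θ => ?_⟩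
  set W := 1 + nrm (fun i => pth (p i)) t θ + nrm (fun i => pth (q i)) t θ with hW
  have key : ∀ i, pt (pth (p i)) t θ = h t θ * pth (pth (p i)) t θ + pth h t θ * pth (p i) t θ
      + pth (fun t θ => pt (p i) t θ - h t θ * pth (p i) t θ) t θ := by
    intro i
    rw [(H.smp i).comm ht]
    have h1 : pth (fun t θ => pt (p i) t θ - h t θ * pth (p i) t θ) t θ
        = pth (pt (p i)) t θ - (pth h t θ * pth (p i) t θ + h t θ * pth (pth (p i)) t θ) :=
      (((H.smp i).pt.dth ht θ).sub ((hh.dth ht θ).mul ((H.smp i).pth.dth ht θ))).deriv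
    rw [h1]; ring
  have hW1 : nrm (fun i => pth (p i)) t θ ≤ W := by
    rw [hW]; linarith [nrm_nonneg (fun i => pth (q i)) t θ]
  rw [pt_nrm (fun i => (H.smp i).pth) ht, pth_nrm (fun i => (H.smp i).pth) ht, key 0, key 1,
    key 2, key 3]
  have k0 := hK 0 t ht θ
  have k1 := hK 1 t ht θ
  have k2 := hK 2 t ht θ
  have k3 := hK 3 t ht θ
  generalize pth (fun t θ => pt (p 0) t θ - h t θ * pth (p 0) t θ) t θ = F0 at *
  generalize pth (fun t θ => pt (p 1) t θ - h t θ * pth (p 1) t θ) t θ = F1 at *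
  generalize pth (fun t θ => pt (p 2) t θ - h t θ * pth (p 2) t θ) t θ = F2 at *
  generalize pth (fun t θ => pt (p 3) t θ - h t θ * pth (p 3) t θ) t θ = F3 at *
  have e1 := abs_le.1 (hC t ht θ)
  have hn := nrm_nonneg (fun i => pth (p i)) t θ
  have h2 : C * nrm (fun i => pth (p i)) t θ ≤ C * W := by gcongr
  have h3 : pth h t θ * nrm (fun i => pth (p i)) t θ ≤ C * nrm (fun i => pth (p i)) t θ :=
    mul_le_mul_of_nonneg_right e1.2 hn
  have h4 : - C * nrm (fun i => pth (p i)) t θ ≤ pth h t θ * nrm (fun i => pth (p i)) t θ :=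
    mul_le_mul_of_nonneg_right e1.1 hn
  simp only [nrm] at h2 h3 h4 hW1
  rw [abs_le]
  constructor
  · nlinarith [sq_nonneg (pth (p 0) t θ + F0), sq_nonneg (pth (p 1) t θ + F1),
      sq_nonneg (pth (p 2) t θ + F2), sq_nonneg (pth (p 3) t θ + F3)]
  · nlinarith [sq_nonneg (pth (p 0) t θ - F0), sq_nonneg (pth (p 1) t θ - F1),
      sq_nonneg (pth (p 2) t θ - F2), sq_nonneg (pth (p 3) t θ - F3)]

/-- Two quantities that satisfy coupled linear differential inequalities along the two families of
characteristics stay bounded in finite time, in both time directions. -/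
lemma bdd_of_transport {a b L : ℝ} {h₁ h₂ f g : ℝ → ℝ → ℝ} (hf : Sm a b f) (hg : Sm a b g)
    (hf0 : ∀ t θ, 0 ≤ f t θ) (hg0 : ∀ t θ, 0 ≤ g t θ) (hL : 0 ≤ L)
    (h1 : ∀ t ∈ Ioo a b, ∀ θ, |pt f t θ - h₁ t θ * pth f t θ| ≤ L * (1 + f t θ + g t θ))
    (h2 : ∀ t ∈ Ioo a b, ∀ θ, |pt g t θ - h₂ t θ * pth g t θ| ≤ L * (1 + f t θ + g t θ))
    {t₀ : ℝ} (ht₀ : t₀ ∈ Ioo a b) : Bd a b f ∧ Bd a b g := by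
  obtain ⟨D1, hD1, hfs⟩ := hf.bdd_slice ht₀
  obtain ⟨D2, hD2, hgs⟩ := hg.bdd_slice ht₀
  set M := D1 + D2 + 1 with hM
  have hM1 : 1 ≤ M := by rw [hM]; linarith
  set k := 3 * L + 1 with hk
  have hk0 : 0 < k := by positivity
  have hff : ∀ θ, f t₀ θ < M := fun θ => by have := (le_abs_self _).trans (hfs θ); linarith
  have hgg : ∀ θ, g t₀ θ < M := fun θ => by have := (le_abs_self _).trans (hgs θ); linarith
  have step : ∀ {h' f' g' : ℝ → ℝ → ℝ} {t θ Φ : ℝ},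
      |pt f' t θ - h' t θ * pth f' t θ| ≤ L * (1 + f' t θ + g' t θ) → 1 ≤ Φ → f' t θ = Φ →
      g' t θ ≤ Φ → pth f' t θ = 0 → |pt f' t θ| < k * Φ := by
    intro h' f' g' t θ Φ e1 e2 e3 e4 e5
    rw [e5, mul_zero, sub_zero, e3] at e1
    refine e1.trans_lt ?_
    have : L * (1 + Φ + g' t θ) ≤ L * (3 * Φ) := by gcongr; linarith
    rw [hk]; linarith
  have h2' : ∀ t ∈ Ioo a b, ∀ θ, |pt g t θ - h₂ t θ * pth g t θ| ≤ L * (1 + g t θ + f t θ) :=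
    fun t ht θ => (h2 t ht θ).trans_eq (by ring)
  have hΦ : ∀ s : ℝ, ∀ t ∈ Ioo a b, HasDerivAt (fun t => M * exp (s * (t - t₀)))
      (s * (M * exp (s * (t - t₀)))) t := by
    intro s t ht
    have := ((((hasDerivAt_id t).sub_const t₀).const_mul s).exp).const_mul M
    refine this.congr_deriv ?_
    simp only [id]; ring
  have hfut : ∀ t, t₀ ≤ t → 1 ≤ M * exp (k * (t - t₀)) := fun t hle =>
    one_le_mul_of_one_le_of_one_le hM1 (one_le_exp (mul_nonneg hk0.le (sub_nonneg.2 hle)))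
  have hpast : ∀ t, t ≤ t₀ → 1 ≤ M * exp (-k * (t - t₀)) := fun t hle =>
    one_le_mul_of_one_le_of_one_le hM1
      (one_le_exp (mul_nonneg_of_nonpos_of_nonpos (by linarith) (sub_nonpos.2 hle)))
  have F := barrier_future ht₀ hf hg (hΦ k) (by simpa using hff) (by simpa using hgg)
    (fun t ht hlt θ e1 e2 e3 =>
      (le_abs_self _).trans_lt (step (h1 t ht θ) (hfut t hlt.le) e1 e2 e3))
    (fun t ht hlt θ e1 e2 e3 =>
      (le_abs_self _).trans_lt (step (h2' t ht θ) (hfut t hlt.le) e1 e2 e3))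
  have B := barrier_past ht₀ hf hg (hΦ (-k)) (by simpa using hff) (by simpa using hgg)
    (fun t ht hlt θ e1 e2 e3 => by
      have := (abs_lt.1 (step (h1 t ht θ) (hpast t hlt.le) e1 e2 e3)).1
      linarith)
    (fun t ht hlt θ e1 e2 e3 => by
      have := (abs_lt.1 (step (h2' t ht θ) (hpast t hlt.le) e1 e2 e3)).1
      linarith)
  have hall : ∀ t ∈ Ioo a b, ∀ θ, f t θ ≤ M * exp (k * (b - a)) ∧ g t θ ≤ M * exp (k * (b - a)) := by
    intro t ht θ
    rcases le_total t₀ t with hle | hle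
    · have e := F t ht hle θ
      have : M * exp (k * (t - t₀)) ≤ M * exp (k * (b - a)) := by
        gcongr
        · exact ht.2.le
        · exact ht₀.1.le
      exact ⟨e.1.le.trans this, e.2.le.trans this⟩
    · have e := B t ht hle θ
      have : M * exp (-k * (t - t₀)) ≤ M * exp (k * (b - a)) := by
        have : -k * (t - t₀) ≤ k * (b - a) := by nlinarith [ht.1, ht₀.2]
        gcongr
      exact ⟨e.1.le.trans this, e.2.le.trans this⟩
  exact ⟨⟨_, fun t ht θ => by rw [abs_of_nonneg (hf0 t θ)]; exact (hall t ht θ).1⟩,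
    ⟨_, fun t ht θ => by rw [abs_of_nonneg (hg0 t θ)]; exact (hall t ht θ).2⟩⟩

lemma Gr.of_bd {a b : ℝ} {W f : ℝ → ℝ → ℝ} (hf : Sm a b f) (h0 : Bd a b f) (h1 : Bd a b (pth f))
    (hW : ∀ t θ, 1 ≤ W t θ) : Gr a b W f := by
  obtain ⟨C, hC0, hC⟩ := h1.nonneg
  refine ⟨hf, h0, C ^ 2, sq_nonneg _, fun t ht θ => ?_⟩
  have h2 := sq_le_sq' (abs_le.1 (hC t ht θ)).1 (abs_le.1 (hC t ht θ)).2
  nlinarith [hW t θ, sq_nonneg C]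

lemma sq_le_nrm (p : Fin 4 → ℝ → ℝ → ℝ) (i : Fin 4) (t θ : ℝ) : p i t θ ^ 2 ≤ nrm p t θ := by
  unfold nrm
  fin_cases i <;>
    simp only [Fin.zero_eta, Fin.mk_one, Fin.reduceFinMk] <;>
    nlinarith [sq_nonneg (p 0 t θ), sq_nonneg (p 1 t θ), sq_nonneg (p 2 t θ), sq_nonneg (p 3 t θ)]

lemma Bd.comp_nrm {a b : ℝ} {p : Fin 4 → ℝ → ℝ → ℝ} (hp : Bd a b (nrm p)) (i : Fin 4) :
    Bd a b (p i) := by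
  obtain ⟨C, hC⟩ := hp
  exact Bd.of_sq ⟨C, fun t ht θ => (sq_le_nrm p i t θ).trans ((le_abs_self _).trans (hC t ht θ))⟩

lemma Bd1.nrm {a b : ℝ} {p : Fin 4 → ℝ → ℝ → ℝ} (hp : ∀ i, Bd1 a b (p i)) : Bd1 a b (nrm p) :=
  (((((hp 0).mul (hp 0)).add ((hp 1).mul (hp 1))).add ((hp 2).mul (hp 2))).add
    ((hp 3).mul (hp 3))).congr fun _ _ _ => by unfold _root_.nrm; ring

namespace NullSys

variable {a b lam : ℝ} {h V : ℝ → ℝ → ℝ} {p q : Fin 4 → ℝ → ℝ → ℝ}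

lemma bd_nrm (N : NullSys a b lam h V p q) {t₀ : ℝ} (ht₀ : t₀ ∈ Ioo a b) :
    Bd a b (nrm p) ∧ Bd a b (nrm q) := by
  obtain ⟨C, hC⟩ := N.nrm_bdd_past ht₀
  obtain ⟨D, hD⟩ := N.nrm_bdd_future ht₀
  have hall : ∀ t ∈ Ioo a b, ∀ θ, nrm p t θ ≤ max C D ∧ nrm q t θ ≤ max C D := by
    intro t ht θ
    rcases le_total t t₀ with hle | hle
    · exact ⟨(hC t ht hle θ).1.trans (le_max_left _ _), (hC t ht hle θ).2.trans (le_max_left _ _)⟩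
    · exact ⟨(hD t ht hle θ).1.trans (le_max_right _ _),
        (hD t ht hle θ).2.trans (le_max_right _ _)⟩
  exact ⟨⟨_, fun t ht θ => by rw [abs_of_nonneg (nrm_nonneg _ _ _)]; exact (hall t ht θ).1⟩,
    ⟨_, fun t ht θ => by rw [abs_of_nonneg (nrm_nonneg _ _ _)]; exact (hall t ht θ).2⟩⟩

/-- The logarithm of the wave speed; it is the natural variable since `∂ₜ log h = -2tV`. -/
def logh (h : ℝ → ℝ → ℝ) (t θ : ℝ) : ℝ := Real.log (h t θ)

lemma sm_logh (N : NullSys a b lam h V p q) : Sm a b (logh h) := N.smh.log N.h_ne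

lemma exp_logh (N : NullSys a b lam h V p q) : ∀ t ∈ Ioo a b, ∀ θ, h t θ = exp (logh h t θ) :=
  fun t ht θ => (Real.exp_log (N.hpos t ht θ)).symm

lemma inv_eq (N : NullSys a b lam h V p q) :
    ∀ t ∈ Ioo a b, ∀ θ, (h t θ)⁻¹ = exp (- logh h t θ) :=
  fun t ht θ => by rw [Real.exp_neg, ← N.exp_logh t ht θ]

lemma pt_logh (N : NullSys a b lam h V p q) :
    ∀ t ∈ Ioo a b, ∀ θ, pt (logh h) t θ = (-2) * t * V t θ := fun t ht θ => by
  have h1 : pt (logh h) t θ = pt h t θ / h t θ := ((N.smh.dt ht θ).log (N.h_ne t ht θ)).deriv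
  have hh := N.h_ne t ht θ
  rw [h1, N.eh t ht θ]
  field_simp

lemma pth_h (N : NullSys a b lam h V p q) :
    ∀ t ∈ Ioo a b, ∀ θ, pth h t θ = h t θ * pth (logh h) t θ := fun t ht θ => by
  have h1 : pth (logh h) t θ = pth h t θ / h t θ := ((N.smh.dth ht θ).log (N.h_ne t ht θ)).deriv
  have hh := N.h_ne t ht θ
  rw [h1]
  field_simp

lemma pt_pth_logh (N : NullSys a b lam h V p q) :
    ∀ t ∈ Ioo a b, ∀ θ, pt (pth (logh h)) t θ = (-2) * t * pth V t θ := fun t ht θ => by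
  rw [N.sm_logh.comm ht, pth_congr N.pt_logh t ht]
  exact ((N.smV.dth ht θ).const_mul ((-2) * t)).deriv

/-- All quantities of the null system are bounded in `C¹`, and so is `∂_θ log h`. -/
lemma bd1 (N : NullSys a b lam h V p q) {t₀ : ℝ} (ht₀ : t₀ ∈ Ioo a b) :
    (∀ i, Bd1 a b (p i)) ∧ (∀ i, Bd1 a b (q i)) ∧ Bd1 a b V ∧ Bd1 a b (logh h) ∧
      Bd1 a b (pth (logh h)) := by
  have ha := N.a_pos
  obtain ⟨bp, bq⟩ := N.bd_nrm ht₀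
  have bpi := bp.comp_nrm
  have bqi := bq.comp_nrm
  have tB : Bd a b (fun t _ => t) := Bd.time ha
  have bV : Bd a b V := by
    obtain ⟨C, hC⟩ := bp
    obtain ⟨D, hD⟩ := bq
    refine ⟨C + D, fun t ht θ => ?_⟩
    rw [abs_of_pos (N.Vpos t ht θ)]
    have := N.tcc t ht θ
    have := (le_abs_self _).trans (hC t ht θ)
    have := (le_abs_self _).trans (hD t ht θ)
    linarith
  have bVt : Bd a b (pt V) :=
    (bV.mul ((((tB.mul (bp.add bq)).sub (((Bd.const 2).mul tB).mul bV)).add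
      ((Bd.const (2 * lam)).mul ((bpi 2).add (bqi 2)))).sub ((bpi 0).add (bqi 0)))).congr
      fun t ht θ => N.pt_V ht θ
  have blt : Bd a b (pt (logh h)) := (((Bd.const (-2)).mul tB).mul bV).congr N.pt_logh
  have bl : Bd a b (logh h) := by
    obtain ⟨C, hC⟩ := blt
    exact N.sm_logh.bdd_of_pt_bdd ht₀ hC
  have bVθ : Bd a b (pth V) :=
    ((bV.mul bl.neg.exp).mul (((tB.mul (bp.sub bq)).add
      ((Bd.const (2 * lam)).mul ((bpi 2).sub (bqi 2)))).sub ((bpi 0).sub (bqi 0)))).congr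
      fun t ht θ => by rw [N.pth_V ht θ, div_eq_mul_inv, N.inv_eq t ht θ]
  have V1 : Bd1 a b V := ⟨N.smV, bV, bVt, bVθ⟩
  have blθ : Bd a b (pth (logh h)) := by
    obtain ⟨C, hC⟩ := (((Bd.const (-2)).mul tB).mul bVθ).congr N.pt_pth_logh
    exact N.sm_logh.pth.bdd_of_pt_bdd ht₀ hC
  have l1 : Bd1 a b (logh h) := ⟨N.sm_logh, bl, blt, blθ⟩
  have h1 : Bd1 a b h := l1.exp.congr N.exp_logh
  -- the angular derivatives of the null derivatives
  set W : ℝ → ℝ → ℝ :=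
    fun t θ => 1 + nrm (fun i => pth (p i)) t θ + nrm (fun i => pth (q i)) t θ with hW
  have hW' : (fun t θ => 1 + nrm (fun i => pth (q i)) t θ + nrm (fun i => pth (p i)) t θ) = W := by
    funext t θ; rw [hW]; ring
  have hW1 : ∀ t θ, 1 ≤ W t θ := fun t θ => by
    have := nrm_nonneg (fun i => pth (p i)) t θ
    have := nrm_nonneg (fun i => pth (q i)) t θ
    rw [hW]; simp only; linarith
  have gV : Gr a b W V := Gr.of_bd N.smV bV bVθ hW1
  have gp : ∀ i, Gr a b W (p i) := fun i => ⟨N.half1.smp i, bpi i, 1, zero_le_one, fun t ht θ => by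
    have := sq_le_nrm (fun i => pth (p i)) i t θ
    have := nrm_nonneg (fun i => pth (q i)) t θ
    rw [hW]; simp only; linarith⟩
  have gq : ∀ i, Gr a b W (q i) := fun i => ⟨N.half2.smp i, bqi i, 1, zero_le_one, fun t ht θ => by
    have := sq_le_nrm (fun i => pth (q i)) i t θ
    have := nrm_nonneg (fun i => pth (p i)) t θ
    rw [hW]; simp only; linarith⟩
  have bnegh : Bd a b (pth fun t θ => - h t θ) := h1.neg.bθ
  obtain ⟨L1, hL1, e1⟩ := N.half1.pt_nrm_pth ha N.smh h1.bθ gV gp gq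
  obtain ⟨L2, hL2, e2⟩ := N.half2.pt_nrm_pth ha N.smh.neg bnegh (by rw [hW']; exact gV)
    (by rw [hW']; exact gq) (by rw [hW']; exact gp)
  obtain ⟨cp, cq⟩ := bdd_of_transport (L := L1 + L2) (h₁ := h) (h₂ := fun t θ => - h t θ)
    (f := nrm fun i => pth (p i)) (g := nrm fun i => pth (q i))
    (sm_nrm fun i => (N.half1.smp i).pth) (sm_nrm fun i => (N.half2.smp i).pth)
    (nrm_nonneg _) (nrm_nonneg _) (by positivity)
    (fun t ht θ => (e1 t ht θ).trans (by
      have := hW1 t θ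
      simp only [hW] at this
      exact mul_le_mul_of_nonneg_right (by linarith) (by linarith)))
    (fun t ht θ => (e2 t ht θ).trans (by
      have := hW1 t θ
      simp only [hW] at this
      rw [add_right_comm]
      exact mul_le_mul_of_nonneg_right (by linarith) (by linarith))) ht₀
  have p1 : ∀ i, Bd1 a b (p i) := fun i =>
    have hθ : Bd a b (pth (p i)) := cp.comp_nrm i
    ⟨N.half1.smp i, bpi i, ((N.half1.source ha gV gp gq i).b0.add (h1.b0.mul hθ)).congr
      fun t ht θ => by ring, hθ⟩
  have q1 : ∀ i, Bd1 a b (q i) := fun i =>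
    have hθ : Bd a b (pth (q i)) := cq.comp_nrm i
    ⟨N.half2.smp i, bqi i, ((N.half2.source ha gV gq gp i).b0.add (h1.neg.b0.mul hθ)).congr
      fun t ht θ => by ring, hθ⟩
  have tB1 : Bd1 a b (fun t _ => t) := Bd1.time ha
  have Vθ1 : Bd1 a b (pth V) :=
    ((V1.mul l1.neg.exp).mul (((tB1.mul ((Bd1.nrm p1).sub (Bd1.nrm q1))).add
      ((Bd1.const (2 * lam)).mul ((p1 2).sub (q1 2)))).sub ((p1 0).sub (q1 0)))).congr
      fun t ht θ => by rw [N.pth_V ht θ, div_eq_mul_inv, N.inv_eq t ht θ]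
  have lθt : Bd1 a b (pt (pth (logh h))) :=
    (((Bd1.const (-2)).mul tB1).mul Vθ1).congr N.pt_pth_logh
  have lθθ : Bd a b (pth (pth (logh h))) := by
    obtain ⟨C, hC⟩ := lθt.bθ.congr fun t ht θ => N.sm_logh.pth.comm ht θ
    exact N.sm_logh.pth.pth.bdd_of_pt_bdd ht₀ hC
  exact ⟨p1, q1, V1, l1, N.sm_logh.pth, blθ, lθt.b0, lθθ⟩

end NullSys

/-! ### From the Gowdy system to the null system -/

namespace GowdySolution

variable {Q lam a b : ℝ}

lemma smη (G : GowdySolution Q lam a b) : Sm a b G.η :=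
  ⟨G.smooth _ (by simp), fun _ _ _ => G.periodic _ (by simp) _ _⟩

lemma smα (G : GowdySolution Q lam a b) : Sm a b G.α :=
  ⟨G.smooth _ (by simp), fun _ _ _ => G.periodic _ (by simp) _ _⟩

lemma smU (G : GowdySolution Q lam a b) : Sm a b G.U :=
  ⟨G.smooth _ (by simp), fun _ _ _ => G.periodic _ (by simp) _ _⟩

lemma smA (G : GowdySolution Q lam a b) : Sm a b G.A :=
  ⟨G.smooth _ (by simp), fun _ _ _ => G.periodic _ (by simp) _ _⟩

lemma smφ (G : GowdySolution Q lam a b) : Sm a b G.φ :=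
  ⟨G.smooth _ (by simp), fun _ _ _ => G.periodic _ (by simp) _ _⟩

lemma smσ (G : GowdySolution Q lam a b) : Sm a b G.σ :=
  ⟨G.smooth _ (by simp), fun _ _ _ => G.periodic _ (by simp) _ _⟩

/-- The potential term `V = α Q² e^{2λφ + 2(η - U)} / 4`. -/
def pot (G : GowdySolution Q lam a b) (t θ : ℝ) : ℝ :=
  (1 / 4) * G.α t θ * Q ^ 2 * exp (2 * lam * G.φ t θ + 2 * (G.η t θ - G.U t θ))

/-- The frame components of the derivative along `∂ₜ + h ∂_θ` of the wave map `(U, A, φ, σ)`. -/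
def frame (G : GowdySolution Q lam a b) (h : ℝ → ℝ → ℝ) : Fin 4 → ℝ → ℝ → ℝ :=
  ![fun t θ => pt G.U t θ + h t θ * pth G.U t θ,
    fun t θ => exp (2 * G.U t θ) / (2 * t) * (pt G.A t θ + h t θ * pth G.A t θ),
    fun t θ => (1 / 2) * (pt G.φ t θ + h t θ * pth G.φ t θ),
    fun t θ => (1 / 2) * exp (lam * G.φ t θ) * (pt G.σ t θ + h t θ * pth G.σ t θ)]

/-- A smooth square root of `α`; both signs are used. -/
structure Root (G : GowdySolution Q lam a b) (h : ℝ → ℝ → ℝ) : Prop where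
  sm : Sm a b h
  ne : ∀ t ∈ Ioo a b, ∀ θ, h t θ ≠ 0
  sq : ∀ t ∈ Ioo a b, ∀ θ, G.α t θ = h t θ ^ 2

variable {G : GowdySolution Q lam a b} {h : ℝ → ℝ → ℝ}

lemma exp_four (G : GowdySolution Q lam a b) (t θ : ℝ) :
    exp (4 * G.U t θ) = exp (2 * G.U t θ) ^ 2 := by
  rw [← Real.exp_nat_mul]; congr 1; push_cast; ring

lemma exp_two_lam (G : GowdySolution Q lam a b) (t θ : ℝ) :
    exp (2 * lam * G.φ t θ) = exp (lam * G.φ t θ) ^ 2 := by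
  rw [← Real.exp_nat_mul]; congr 1; push_cast; ring

lemma sm_pot (G : GowdySolution Q lam a b) : Sm a b G.pot :=
  (((Sm.const (1 / 4)).mul G.smα).mul (Sm.const (Q ^ 2))).mul
    (((Sm.const (2 * lam)).mul G.smφ).add ((Sm.const 2).mul (G.smη.sub G.smU))).exp

lemma Root.neg (R : Root G h) : Root G (fun t θ => - h t θ) :=
  ⟨R.sm.neg, fun t ht θ => neg_ne_zero.2 (R.ne t ht θ), fun t ht θ => by rw [R.sq t ht θ]; ring⟩

lemma Root.pth_α (R : Root G h) {t : ℝ} (ht : t ∈ Ioo a b) (θ : ℝ) :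
    pth G.α t θ = 2 * h t θ * pth h t θ := by
  rw [pth_congr R.sq t ht]
  refine ((R.sm.dth ht θ).pow 2).deriv.trans ?_
  norm_num

lemma pt_α (G : GowdySolution Q lam a b) {t : ℝ} (ht : t ∈ Ioo a b) (θ : ℝ) :
    pt G.α t θ = - (4 * t * G.pot t θ * G.α t θ) := by
  rw [G.sys.constraint_α t ht θ]; unfold pot; ring

lemma Root.pt_h (R : Root G h) {t : ℝ} (ht : t ∈ Ioo a b) (θ : ℝ) :
    pt h t θ = - (2 * t * G.pot t θ * h t θ) := by
  have h1 : pt G.α t θ = 2 * h t θ * pt h t θ := by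
    rw [pt_congr R.sq t ht]
    refine ((R.sm.dt ht θ).pow 2).deriv.trans ?_
    norm_num
  have h2 := G.pt_α ht θ
  have hh := R.ne t ht θ
  rw [h1, R.sq t ht θ] at h2
  have : 2 * h t θ * (pt h t θ + 2 * t * G.pot t θ * h t θ) = 0 := by linear_combination h2
  rcases mul_eq_zero.1 this with h3 | h3
  · exact absurd h3 (mul_ne_zero two_ne_zero hh)
  · linarith

lemma Root.sm_frame (R : Root G h) (ha : 0 < a) (i : Fin 4) : Sm a b (G.frame h i) := by
  have ht0 : ∀ t ∈ Ioo a b, ∀ _ : ℝ, 2 * t ≠ 0 := fun t ht _ =>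
    mul_ne_zero two_ne_zero (ha.trans ht.1).ne'
  fin_cases i
  · exact G.smU.pt.add (R.sm.mul G.smU.pth)
  · exact (((Sm.const 2).mul G.smU).exp.div ((Sm.const 2).mul Sm.time) ht0).mul
      (G.smA.pt.add (R.sm.mul G.smA.pth))
  · exact (Sm.const (1 / 2)).mul (G.smφ.pt.add (R.sm.mul G.smφ.pth))
  · exact ((Sm.const (1 / 2)).mul ((Sm.const lam).mul G.smφ).exp).mul
      (G.smσ.pt.add (R.sm.mul G.smσ.pth))

/-- Derivatives of a null derivative `ḟ + h f'`. -/
lemma Root.dt_null (R : Root G h) {f : ℝ → ℝ → ℝ} (hf : Sm a b f) {t : ℝ} (ht : t ∈ Ioo a b)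
    (θ : ℝ) : HasDerivAt (fun s => pt f s θ + h s θ * pth f s θ)
      (pt (pt f) t θ + (- (2 * t * G.pot t θ * h t θ) * pth f t θ + h t θ * pth (pt f) t θ)) t := by
  have := (hf.pt.dt ht θ).add ((R.sm.dt ht θ).mul (hf.pth.dt ht θ))
  rw [R.pt_h ht, hf.comm ht] at this
  exact this

lemma Root.dth_null (R : Root G h) {f : ℝ → ℝ → ℝ} (hf : Sm a b f) {t : ℝ} (ht : t ∈ Ioo a b)
    (θ : ℝ) : HasDerivAt (fun x => pt f t x + h t x * pth f t x)
      (pth (pt f) t θ + (pth h t θ * pth f t θ + h t θ * pth (pth f) t θ)) θ :=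
  (hf.pt.dth ht θ).add ((R.sm.dth ht θ).mul (hf.pth.dth ht θ))

/-- Each sign of the square root of `α` gives one half of the null system. -/
lemma Root.halfSys (R : Root G h) (ha : 0 < a) :
    HalfSys a b lam h G.pot (G.frame h) (G.frame fun t θ => - h t θ) where
  smp := R.sm_frame ha
  e0 t ht θ := by
    have ht0 : t ≠ 0 := (ha.trans ht.1).ne'
    have hh := R.ne t ht θ
    have h1 : pt (G.frame h 0) t θ = _ := (R.dt_null G.smU ht θ).deriv
    have h2 : pth (G.frame h 0) t θ = _ := (R.dth_null G.smU ht θ).deriv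
    have e := G.sys.evol_U t ht θ
    rw [G.pt_α ht, R.pth_α ht, R.sq t ht, G.exp_four] at e
    have hV : 1 / 4 * h t θ ^ 2 * Q ^ 2 * exp (2 * lam * G.φ t θ + 2 * (G.η t θ - G.U t θ))
        = G.pot t θ := by unfold pot; rw [R.sq t ht]
    rw [hV] at e
    rw [h1, h2]
    simp only [frame, Matrix.cons_val]
    generalize exp (2 * G.U t θ) = x at *
    generalize G.pot t θ = v at *
    field_simp at e ⊢
    linear_combination e
  e1 t ht θ := by
    have ht0 : t ≠ 0 := (ha.trans ht.1).ne'
    have hh := R.ne t ht θ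
    have hU : HasDerivAt (fun s => exp (2 * G.U s θ) / (2 * s)) _ t :=
      ((G.smU.dt ht θ).const_mul 2).exp.div ((hasDerivAt_id t).const_mul 2)
        (mul_ne_zero two_ne_zero ht0)
    have hU' : HasDerivAt (fun x => exp (2 * G.U t x) / (2 * t)) _ θ :=
      ((G.smU.dth ht θ).const_mul 2).exp.div_const (2 * t)
    have h1 : pt (G.frame h 1) t θ = _ := (hU.mul (R.dt_null G.smA ht θ)).deriv
    have h2 : pth (G.frame h 1) t θ = _ := (hU'.mul (R.dth_null G.smA ht θ)).deriv
    have e := G.sys.evol_A t ht θ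
    rw [G.pt_α ht, R.pth_α ht, R.sq t ht] at e
    rw [h1, h2]
    simp only [frame, Matrix.cons_val]
    have hx : exp (2 * G.U t θ) ≠ 0 := (exp_pos _).ne'
    generalize exp (2 * G.U t θ) = x at *
    generalize G.pot t θ = v at *
    field_simp at e ⊢
    linear_combination e
  e2 t ht θ := by
    have ht0 : t ≠ 0 := (ha.trans ht.1).ne'
    have hh := R.ne t ht θ
    have h1 : pt (G.frame h 2) t θ = _ := ((R.dt_null G.smφ ht θ).const_mul (1 / 2)).deriv
    have h2 : pth (G.frame h 2) t θ = _ := ((R.dth_null G.smφ ht θ).const_mul (1 / 2)).deriv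
    have e := G.sys.evol_φ t ht θ
    rw [G.pt_α ht, R.pth_α ht, R.sq t ht, G.exp_two_lam] at e
    have hV : lam * h t θ ^ 2 * Q ^ 2 * exp (2 * lam * G.φ t θ + 2 * (G.η t θ - G.U t θ))
        = 4 * lam * G.pot t θ := by unfold pot; rw [R.sq t ht]; ring
    rw [hV] at e
    rw [h1, h2]
    simp only [frame, Matrix.cons_val]
    generalize exp (lam * G.φ t θ) = x at *
    generalize G.pot t θ = v at *
    field_simp at e ⊢
    linear_combination e
  e3 t ht θ := by
    have ht0 : t ≠ 0 := (ha.trans ht.1).ne'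
    have hh := R.ne t ht θ
    have hU : HasDerivAt (fun s => (1 / 2) * exp (lam * G.φ s θ)) _ t :=
      ((G.smφ.dt ht θ).const_mul lam).exp.const_mul (1 / 2)
    have hU' : HasDerivAt (fun x => (1 / 2) * exp (lam * G.φ t x)) _ θ :=
      ((G.smφ.dth ht θ).const_mul lam).exp.const_mul (1 / 2)
    have h1 : pt (G.frame h 3) t θ = _ := (hU.mul (R.dt_null G.smσ ht θ)).deriv
    have h2 : pth (G.frame h 3) t θ = _ := (hU'.mul (R.dth_null G.smσ ht θ)).deriv
    have e := G.sys.evol_σ t ht θ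
    rw [G.pt_α ht, R.pth_α ht, R.sq t ht] at e
    rw [h1, h2]
    simp only [frame, Matrix.cons_val]
    have hx : exp (lam * G.φ t θ) ≠ 0 := (exp_pos _).ne'
    generalize exp (lam * G.φ t θ) = x at *
    generalize G.pot t θ = v at *
    field_simp at e ⊢
    linear_combination e
  eV t ht θ := by
    have ht0 : t ≠ 0 := (ha.trans ht.1).ne'
    have hh := R.ne t ht θ
    have h1 : pt G.pot t θ = _ := ((((G.smα.dt ht θ).const_mul (1 / 4)).mul_const (Q ^ 2)).mul
      (((G.smφ.dt ht θ).const_mul (2 * lam)).add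
        (((G.smη.dt ht θ).sub (G.smU.dt ht θ)).const_mul 2)).exp).deriv
    have h2 : pth G.pot t θ = _ := ((((G.smα.dth ht θ).const_mul (1 / 4)).mul_const (Q ^ 2)).mul
      (((G.smφ.dth ht θ).const_mul (2 * lam)).add
        (((G.smη.dth ht θ).sub (G.smU.dth ht θ)).const_mul 2)).exp).deriv
    have e1 := G.sys.constraint_t t ht θ
    have e2 := G.sys.constraint_θ t ht θ
    have hα := G.pt_α ht θ
    rw [R.pth_α ht, R.sq t ht, G.exp_four, G.exp_two_lam] at e2
    have hV : h t θ ^ 2 * Q ^ 2 * exp (2 * lam * G.φ t θ + 2 * (G.η t θ - G.U t θ))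
        = 4 * G.pot t θ := by unfold pot; rw [R.sq t ht]; ring
    rw [R.sq t ht, hV, G.exp_four, G.exp_two_lam] at e1
    rw [R.sq t ht] at hα
    have k1 : pt G.pot t θ = G.pot t θ * (- (4 * t * G.pot t θ)
        + (2 * lam * pt G.φ t θ + 2 * (pt G.η t θ - pt G.U t θ))) := by
      rw [h1, hα]; simp only [pot, Pi.add_apply, Pi.sub_apply]; rw [R.sq t ht]; ring
    have k2 : pth G.pot t θ = G.pot t θ * (2 * pth h t θ / h t θ
        + (2 * lam * pth G.φ t θ + 2 * (pth G.η t θ - pth G.U t θ))) := by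
      rw [h2, R.pth_α ht]; simp only [pot, Pi.add_apply, Pi.sub_apply]; rw [R.sq t ht]
      field_simp
    rw [k1, k2]
    simp only [frame, nrm, Matrix.cons_val]
    have f1 := (div_eq_iff ht0).1 e1
    have f2 := (div_eq_iff ht0).1 e2
    rw [f1, f2]
    generalize exp (lam * G.φ t θ) = x at *
    generalize exp (2 * G.U t θ) = y at *
    generalize G.pot t θ = v at *
    field_simp
    ring

lemma root_sqrt (G : GowdySolution Q lam a b) : Root G (fun t θ => √(G.α t θ)) :=
  ⟨G.smα.sqrt fun t ht θ => (G.sys.alpha_pos t ht θ).ne',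
    fun t ht θ => (Real.sqrt_pos.2 (G.sys.alpha_pos t ht θ)).ne',
    fun t ht θ => (Real.sq_sqrt (G.sys.alpha_pos t ht θ).le).symm⟩

lemma nullSys (G : GowdySolution Q lam a b) (ha : 0 < a) (hQ : Q ≠ 0) (hlam : |lam| ≤ 1 / 2)
    (htcc : TCC Q lam a b G.η G.α G.U G.φ G.σ) :
    NullSys a b lam (fun t θ => √(G.α t θ)) G.pot (G.frame fun t θ => √(G.α t θ))
      (G.frame fun t θ => - √(G.α t θ)) where
  a_pos := ha
  lam_le := hlam
  smh := G.root_sqrt.sm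
  smV := G.sm_pot
  hpos t ht θ := Real.sqrt_pos.2 (G.sys.alpha_pos t ht θ)
  Vpos t ht θ := by
    have := G.sys.alpha_pos t ht θ
    unfold pot; positivity
  eh t ht θ := G.root_sqrt.pt_h ht θ
  half1 := G.root_sqrt.halfSys ha
  half2 := by simpa only [neg_neg] using G.root_sqrt.neg.halfSys ha
  tcc t ht θ := by
    have h1 := htcc t ht θ
    have h2 : (1 / 2) * G.α t θ * Q ^ 2 * exp (2 * (G.η t θ + lam * G.φ t θ - G.U t θ))
        = 2 * G.pot t θ := by
      unfold pot
      rw [show 2 * (G.η t θ + lam * G.φ t θ - G.U t θ)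
        = 2 * lam * G.φ t θ + 2 * (G.η t θ - G.U t θ) by ring]
      ring
    rw [h2, G.exp_two_lam] at h1
    simp only [frame, nrm, Matrix.cons_val]
    generalize √(G.α t θ) = h at *
    generalize exp (lam * G.φ t θ) = x at *
    generalize exp (2 * G.U t θ) / (2 * t) = y at *
    nlinarith [sq_nonneg (h * pth G.φ t θ), sq_nonneg (x * (h * pth G.σ t θ)),
      sq_nonneg (pt G.U t θ + h * pth G.U t θ), sq_nonneg (pt G.U t θ + -h * pth G.U t θ),
      sq_nonneg (y * (pt G.A t θ + h * pth G.A t θ)),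
      sq_nonneg (y * (pt G.A t θ + -h * pth G.A t θ)), sq_nonneg (pt G.φ t θ),
      sq_nonneg (x * pt G.σ t θ)]

end GowdySolution

/-! ### Recovering the metric functions -/

/-- Finitely many uniform bounds have a common constant. -/
lemma exists_common_bound {ι : Type*} {P : ι → ℝ → Prop}
    (hP : ∀ i C D, C ≤ D → P i C → P i D) (l : List ι) (h : ∀ i ∈ l, ∃ C, P i C) :
    ∃ C, ∀ i ∈ l, P i C := by
  induction l with
  | nil => exact ⟨0, by simp⟩
  | cons x l ih =>
    obtain ⟨C, hC⟩ := ih fun i hi => h i (List.mem_cons_of_mem _ hi)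
    obtain ⟨D, hD⟩ := h x List.mem_cons_self
    refine ⟨max C D, fun i hi => ?_⟩
    rcases List.mem_cons.1 hi with rfl | hi
    · exact hP _ _ _ (le_max_right _ _) hD
    · exact hP _ _ _ (le_max_left _ _) (hC i hi)

lemma bdd_list {a b t₀ : ℝ} {f : ℝ → ℝ → ℝ} (hf : Sm a b f) (ht₀ : t₀ ∈ Ioo a b)
    (h1 : Bd1 a b (pt f)) (h2 : Bd1 a b (pth f)) :
    ∃ C : ℝ, ∀ g ∈ ([f, pt f, pth f, pt (pt f), pt (pth f), pth (pt f), pth (pth f)] :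
      List (ℝ → ℝ → ℝ)), ∀ t ∈ Ioo a b, ∀ θ : ℝ, |g t θ| ≤ C := by
  refine exists_common_bound (fun g C D hCD hg t ht θ => (hg t ht θ).trans hCD) _ ?_
  have hf1 := Bd1.of_deriv hf ht₀ h1.b0 h2.b0
  intro g hg
  simp only [List.mem_cons, List.not_mem_nil, or_false] at hg
  rcases hg with rfl | rfl | rfl | rfl | rfl | rfl | rfl
  exacts [hf1.b0, h1.b0, h2.b0, h1.bt, h2.bt, h1.bθ, h2.bθ]

namespace GowdySolution

variable {Q lam a b : ℝ}

/-- The first derivatives of all metric functions are expressed through the quantities bounded in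
`C¹` by `NullSys.bd1`. -/
lemma deriv_bd1 (G : GowdySolution Q lam a b) (ha : 0 < a) (hQ : Q ≠ 0) (hlam : |lam| ≤ 1 / 2)
    (htcc : TCC Q lam a b G.η G.α G.U G.φ G.σ) {t₀ : ℝ} (ht₀ : t₀ ∈ Ioo a b) :
    ∀ f ∈ ([G.η, G.α, G.U, G.A, G.φ, G.σ] : List (ℝ → ℝ → ℝ)),
      Bd1 a b (pt f) ∧ Bd1 a b (pth f) := by
  have N := G.nullSys ha hQ hlam htcc
  have R := G.root_sqrt
  obtain ⟨p1, q1, V1, l1, k1⟩ := N.bd1 ht₀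
  set h : ℝ → ℝ → ℝ := fun t θ => √(G.α t θ) with hh
  set p := G.frame h with hp
  set q := G.frame fun t θ => - √(G.α t θ) with hq
  have h1 : Bd1 a b h := l1.exp.congr N.exp_logh
  have i1 : Bd1 a b (fun t θ => (h t θ)⁻¹) := l1.neg.exp.congr N.inv_eq
  have t1 : Bd1 a b (fun t _ => t) := Bd1.time ha
  have c1 := fun c : ℝ => Bd1.const (a := a) (b := b) c
  have hne : ∀ t ∈ Ioo a b, ∀ θ, h t θ ≠ 0 := R.ne
  have ht0 : ∀ t ∈ Ioo a b, t ≠ 0 := fun t ht => (ha.trans ht.1).ne'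
  have hU : Bd1 a b (pt G.U) ∧ Bd1 a b (pth G.U) := by
    refine ⟨((c1 (1 / 2)).mul ((p1 0).add (q1 0))).congr fun t ht θ => ?_,
      (((c1 (1 / 2)).mul ((p1 0).sub (q1 0))).mul i1).congr fun t ht θ => ?_⟩
    · simp only [hp, hq, hh, frame, Matrix.cons_val]; ring
    · have := hne t ht θ
      simp only [hh] at this
      simp only [hp, hq, hh, frame, Matrix.cons_val]; field_simp; ring
  have hφ : Bd1 a b (pt G.φ) ∧ Bd1 a b (pth G.φ) := by
    refine ⟨((p1 2).add (q1 2)).congr fun t ht θ => ?_,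
      (((p1 2).sub (q1 2)).mul i1).congr fun t ht θ => ?_⟩
    · simp only [hp, hq, hh, frame, Matrix.cons_val]; ring
    · have := hne t ht θ
      simp only [hh] at this
      simp only [hp, hq, hh, frame, Matrix.cons_val]; field_simp; ring
  have eU : Bd1 a b (fun t θ => exp (-(2 * G.U t θ))) :=
    ((c1 2).mul (Bd1.of_deriv G.smU ht₀ hU.1.b0 hU.2.b0)).neg.exp
  have eφ : Bd1 a b (fun t θ => exp (-(lam * G.φ t θ))) :=
    ((c1 lam).mul (Bd1.of_deriv G.smφ ht₀ hφ.1.b0 hφ.2.b0)).neg.exp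
  have hA : Bd1 a b (pt G.A) ∧ Bd1 a b (pth G.A) := by
    refine ⟨((t1.mul eU).mul ((p1 1).add (q1 1))).congr fun t ht θ => ?_,
      (((t1.mul eU).mul ((p1 1).sub (q1 1))).mul i1).congr fun t ht θ => ?_⟩ <;>
    · have := hne t ht θ
      have := ht0 t ht
      have := (exp_pos (2 * G.U t θ)).ne'
      simp only [hh] at *
      simp only [hp, hq, frame, Matrix.cons_val, Real.exp_neg]; field_simp; ring
  have hσ : Bd1 a b (pt G.σ) ∧ Bd1 a b (pth G.σ) := by
    refine ⟨(eφ.mul ((p1 3).add (q1 3))).congr fun t ht θ => ?_,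
      ((eφ.mul ((p1 3).sub (q1 3))).mul i1).congr fun t ht θ => ?_⟩ <;>
    · have := hne t ht θ
      have := (exp_pos (lam * G.φ t θ)).ne'
      simp only [hh] at *
      simp only [hp, hq, frame, Matrix.cons_val, Real.exp_neg]; field_simp; ring
  have hα : Bd1 a b (pt G.α) ∧ Bd1 a b (pth G.α) := by
    refine ⟨((((c1 (-4)).mul t1).mul V1).mul (h1.mul h1)).congr fun t ht θ => ?_,
      ((((c1 2).mul h1).mul h1).mul k1).congr fun t ht θ => ?_⟩
    · rw [G.pt_α ht, R.sq t ht]; ring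
    · rw [R.pth_α ht, N.pth_h t ht]; ring
  have hη : Bd1 a b (pt G.η) ∧ Bd1 a b (pth G.η) := by
    refine ⟨(t1.mul (((c1 (1 / 2)).mul ((Bd1.nrm p1).add (Bd1.nrm q1))).add V1)).congr
        fun t ht θ => ?_,
      (((t1.mul ((c1 (1 / 2)).mul ((Bd1.nrm p1).sub (Bd1.nrm q1)))).mul i1).sub k1).congr
        fun t ht θ => ?_⟩
    · have e1 := (div_eq_iff (ht0 t ht)).1 (G.sys.constraint_t t ht θ)
      have hV : h t θ ^ 2 * Q ^ 2 * exp (2 * lam * G.φ t θ + 2 * (G.η t θ - G.U t θ))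
          = 4 * G.pot t θ := by unfold pot; rw [R.sq t ht]; ring
      rw [R.sq t ht, hV, G.exp_four, G.exp_two_lam] at e1
      rw [e1]
      have := ht0 t ht
      simp only [hp, hq, hh, frame, nrm, Matrix.cons_val]
      field_simp
      ring
    · have e1 := (div_eq_iff (ht0 t ht)).1 (G.sys.constraint_θ t ht θ)
      rw [R.pth_α ht, R.sq t ht, G.exp_four, G.exp_two_lam, N.pth_h t ht] at e1
      rw [e1]
      have := ht0 t ht
      have := hne t ht θ
      simp only [hp, hq, hh, frame, nrm, Matrix.cons_val] at *
      field_simp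
      ring
  intro f hf
  simp only [List.mem_cons, List.not_mem_nil, or_false] at hf
  rcases hf with rfl | rfl | rfl | rfl | rfl | rfl
  exacts [hη, hα, hU, hA, hφ, hσ]

end GowdySolution

theorem global_C2_bounds (Q lam Tm Tp t_i : ℝ) (hQ : Q ≠ 0) (hTm : 0 < Tm) (hti : Tm < t_i)
    (hTp : t_i < Tp) (G : GowdySolution Q lam Tm Tp)
    (lamBar : ℝ) (hlam : |lam| ≤ lamBar) (hlamBar : lamBar < 1 / 2)
    (htcc : TCC Q lam Tm Tp G.η G.α G.U G.φ G.σ) :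
    ∃ C : ℝ, ∀ f ∈ ([G.η, G.α, G.U, G.A, G.φ, G.σ] : List (ℝ → ℝ → ℝ)),
      ∀ g ∈ ([f, pt f, pth f, pt (pt f), pt (pth f), pth (pt f), pth (pth f)] :
          List (ℝ → ℝ → ℝ)),
        ∀ t ∈ Ioo Tm Tp, ∀ θ : ℝ, |g t θ| ≤ C := by
  have ht₀ : t_i ∈ Ioo Tm Tp := ⟨hti, hTp⟩
  have hD := G.deriv_bd1 hTm hQ (hlam.trans hlamBar.le) htcc ht₀
  refine exists_common_bound (fun f C D hCD hf g hg t ht θ => (hf g hg t ht θ).trans hCD) _ ?_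
  exact fun f hf => bdd_list ⟨G.smooth f hf, fun t _ θ => G.periodic f hf t θ⟩ ht₀
    (hD f hf).1 (hD f hf).2

end
end
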